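/- arXiv:2102.01247 — 7 statements merged into one kernel-verified Lean document; each statement's English description precedes it below -/
import Mathlib

section
/- Fix ε∈(0,1) and V₁,V₂>0. Then there is a constant γ>0 such that for every positive integer K, the density f_{S_K} of S_K satisfies f_{S_K}(F_{S_K}^{-1}(ε)) ≥ γ; consequently F_{S_K}^{-1} is differentiable at p=ε with derivative 1/f_{S_K}(F_{S_K}^{-1}(ε)), and sup_{K≥1} (d/dp)F_{S_K}^{-1}(p)|_{p=ε} < ∞. -/
/-!
The point is that the maximum `M` of `K` standard Gaussians is tight around a `K`-dependent
centre, uniformly in `K`. Let `a` be its `δ`-quantile, `Φ(a)^K = δ`. Then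
`K (1 - Φ(a)) ≤ -K log Φ(a) = -log δ`, and `a` is at least the `δ`-quantile `x₀` of one Gaussian.
Since `1 - Φ(a + c) ≤ exp(-(c x₀ + c²/2)) (1 - Φ(a))` (`gaussian_tail_le`), a shift `c` depending
only on `δ` makes `K (1 - Φ(a + c)) ≤ δ`, and Bernoulli's inequality gives `Φ(a + c)^K ≥ 1 - δ`
(`exists_window`). So `M` is in `(a, a + c]` with probability at least `1 - 2δ`.

For `δ` small compared with `ε` and `1 - ε`, this puts the `ε`-quantile of `S_K` within a bounded
distance of that window (`FSK_le`, `le_FSK`), and the convolution formula for the density is then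
bounded below there by `1 - 2δ` times a value of the Gaussian density at a bounded argument
(`le_fSK`, `exists_uniform_quantile`).

Conditioning on `Z₀` writes `FSK` as a Gaussian average of `Φ((s - √V₂ z) / √V₁)^K`;
differentiating under the integral shows `FSK` has the continuous positive derivative `fSK`.
Hence `FSKinv` is a left inverse of a strictly increasing `C¹` function and the inverse function
theorem gives its derivative.
-/


open MeasureTheory

/-- The CDF of `S_K = √V₂·Z₀ + √V₁·max_{k∈[K]} Z_k`, where `Z₀,…,Z_K` are i.i.d. standard
Gaussian random variables (realized as the coordinates of the product Gaussian measure on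
`Fin (K+1) → ℝ`, with `Z₀` the coordinate `0` and `Z₁,…,Z_K` the remaining `K` coordinates). -/
noncomputable def FSK (V1 V2 : ℝ) (K : ℕ) (s : ℝ) : ℝ :=
  ((Measure.pi fun _ : Fin (K + 1) => ProbabilityTheory.gaussianReal 0 1)
    {ω | Real.sqrt V2 * ω 0 + Real.sqrt V1 * (⨆ k : Fin K, ω k.succ) ≤ s}).toReal

/-- The inverse CDF of `S_K`: `F_{S_K}^{-1}(p) = sup {s : F_{S_K}(s) ≤ p}`. -/
noncomputable def FSKinv (V1 V2 : ℝ) (K : ℕ) (p : ℝ) : ℝ :=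
  sSup {s | FSK V1 V2 K s ≤ p}

/-- The standard Gaussian CDF `Φ`. -/
noncomputable def stdNormCDF (x : ℝ) : ℝ :=
  ((ProbabilityTheory.gaussianReal 0 1) (Set.Iic x)).toReal

/-- The standard Gaussian pdf `φ`. -/
noncomputable def stdNormPDF (x : ℝ) : ℝ :=
  Real.exp (-(x ^ 2) / 2) / Real.sqrt (2 * Real.pi)

/-- The probability density of `√V₁·max_{k∈[K]} Z_k` for i.i.d. standard Gaussians
`Z₁,…,Z_K`. -/
noncomputable def maxGaussPDF (V1 : ℝ) (K : ℕ) (t : ℝ) : ℝ :=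
  ((K : ℝ) / Real.sqrt V1) * (stdNormCDF (t / Real.sqrt V1)) ^ (K - 1) *
    stdNormPDF (t / Real.sqrt V1)

/-- The (continuous) probability density `f_{S_K}` of `S_K = √V₂·Z₀ + √V₁·max_{k∈[K]} Z_k`,
written as the convolution of the density of `√V₂·Z₀` with that of `√V₁·max_{k∈[K]} Z_k`. -/
noncomputable def fSK (V1 V2 : ℝ) (K : ℕ) (s : ℝ) : ℝ :=
  ∫ t : ℝ, (stdNormPDF ((s - t) / Real.sqrt V2) / Real.sqrt V2) * maxGaussPDF V1 K t

open ProbabilityTheory Filter Topology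

/-! ### The standard Gaussian density and distribution function -/

lemma stdNormPDF_eq (x : ℝ) : stdNormPDF x = gaussianPDFReal 0 1 x := by
  simp [stdNormPDF, gaussianPDFReal, div_eq_inv_mul]

lemma stdNormPDF_pos (x : ℝ) : 0 < stdNormPDF x := by
  unfold stdNormPDF; positivity

lemma continuous_stdNormPDF : Continuous stdNormPDF := by
  unfold stdNormPDF; fun_prop

lemma integrable_stdNormPDF : Integrable stdNormPDF := by
  rw [show stdNormPDF = gaussianPDFReal 0 1 from funext stdNormPDF_eq]
  exact integrable_gaussianPDFReal 0 1

lemma stdNormPDF_le_of_abs_le {x y : ℝ} (h : |x| ≤ |y|) : stdNormPDF y ≤ stdNormPDF x := by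
  unfold stdNormPDF
  have := sq_le_sq.2 h
  gcongr

lemma stdNormCDF_eq_cdf (x : ℝ) : stdNormCDF x = cdf (gaussianReal 0 1) x := by
  rw [cdf_eq_real]; rfl

lemma stdNormCDF_eq_integral (x : ℝ) : stdNormCDF x = ∫ t in Set.Iic x, stdNormPDF t := by
  rw [stdNormCDF, gaussianReal_apply_eq_integral _ one_ne_zero, ENNReal.toReal_ofReal]
  · simp only [stdNormPDF_eq]
  · exact integral_nonneg fun t => gaussianPDFReal_nonneg 0 1 t

lemma hasDerivAt_stdNormCDF (x : ℝ) : HasDerivAt stdNormCDF (stdNormPDF x) x := by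
  have h : stdNormCDF = fun u => stdNormCDF 0 + ∫ t in (0 : ℝ)..u, stdNormPDF t := by
    funext u
    rw [← intervalIntegral.integral_Iic_sub_Iic integrable_stdNormPDF.integrableOn
      integrable_stdNormPDF.integrableOn, ← stdNormCDF_eq_integral, ← stdNormCDF_eq_integral]
    ring
  rw [h]
  exact (continuous_stdNormPDF.integral_hasStrictDerivAt 0 x).hasDerivAt.const_add _

lemma continuous_stdNormCDF : Continuous stdNormCDF :=
  continuous_iff_continuousAt.2 fun x => (hasDerivAt_stdNormCDF x).continuousAt

lemma strictMono_stdNormCDF : StrictMono stdNormCDF :=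
  strictMono_of_deriv_pos fun x => by
    rw [(hasDerivAt_stdNormCDF x).deriv]; exact stdNormPDF_pos x

lemma stdNormCDF_pos (x : ℝ) : 0 < stdNormCDF x :=
  lt_of_le_of_lt ENNReal.toReal_nonneg (strictMono_stdNormCDF (sub_one_lt x))

lemma stdNormCDF_le_one (x : ℝ) : stdNormCDF x ≤ 1 := by
  rw [stdNormCDF_eq_cdf]; exact cdf_le_one _ x

lemma tendsto_stdNormCDF_atTop : Tendsto stdNormCDF atTop (𝓝 1) := by
  rw [show stdNormCDF = cdf (gaussianReal 0 1) from funext stdNormCDF_eq_cdf]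
  exact tendsto_cdf_atTop _

lemma tendsto_stdNormCDF_atBot : Tendsto stdNormCDF atBot (𝓝 0) := by
  rw [show stdNormCDF = cdf (gaussianReal 0 1) from funext stdNormCDF_eq_cdf]
  exact tendsto_cdf_atBot _

lemma exists_stdNormCDF_pow_eq {K : ℕ} (hK : 0 < K) {δ : ℝ} (h0 : 0 < δ) (h1 : δ < 1) :
    ∃ a, stdNormCDF a ^ K = δ := by
  have hb : Tendsto (fun x => stdNormCDF x ^ K) atBot (𝓝 0) := by
    simpa [hK.ne'] using tendsto_stdNormCDF_atBot.pow K
  have ht : Tendsto (fun x => stdNormCDF x ^ K) atTop (𝓝 1) := by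
    simpa using tendsto_stdNormCDF_atTop.pow K
  exact mem_range_of_exists_le_of_exists_ge (continuous_stdNormCDF.pow K)
    ((hb.eventually_le_const h0).exists) ((ht.eventually_const_le h1).exists)

/-! ### Tightness of the maximum of Gaussians -/

/-- The ratio of Gaussian upper tails at `x + c` and `x` is bounded uniformly over `x ≥ x₀`:
`φ(u + c) = φ(u) exp(-cu - c²/2)`, so the difference of the two sides is antitone on
`[x₀, ∞)`, and it vanishes at infinity. -/
lemma gaussian_tail_le {x₀ c x : ℝ} (hc : 0 ≤ c) (hx : x₀ ≤ x) :
    1 - stdNormCDF (x + c) ≤ Real.exp (-(c * x₀ + c ^ 2 / 2)) * (1 - stdNormCDF x) := by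
  set r := Real.exp (-(c * x₀ + c ^ 2 / 2)) with hr
  set h : ℝ → ℝ := fun u => r * (1 - stdNormCDF u) - (1 - stdNormCDF (u + c)) with hh
  have hd : ∀ u, HasDerivAt h (r * (-stdNormPDF u) - (-stdNormPDF (u + c))) u := fun u =>
    (((hasDerivAt_stdNormCDF u).const_sub 1).const_mul r).sub
      (((hasDerivAt_stdNormCDF (u + c)).comp_add_const u c).const_sub 1)
  have hanti : AntitoneOn h (Set.Ici x₀) := by
    refine antitoneOn_of_deriv_nonpos (convex_Ici x₀)
      (fun u _ => (hd u).continuousAt.continuousWithinAt)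
      (fun u _ => (hd u).differentiableAt.differentiableWithinAt) fun u hu => ?_
    rw [interior_Ici] at hu
    have hu' : x₀ < u := hu
    rw [(hd u).deriv]
    have : stdNormPDF (u + c) ≤ r * stdNormPDF u := by
      unfold stdNormPDF
      rw [← mul_div_assoc, hr, ← Real.exp_add]
      gcongr
      nlinarith
    linarith
  have hlim : Tendsto h atTop (𝓝 0) := by
    have h1 := (tendsto_stdNormCDF_atTop.const_sub 1).const_mul r
    have h2 := (tendsto_stdNormCDF_atTop.comp
      (tendsto_atTop_add_const_right atTop c tendsto_id)).const_sub 1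
    simpa using h1.sub h2
  have hnn : 0 ≤ h x := le_of_tendsto hlim <| by
    filter_upwards [eventually_ge_atTop x] with u hu
    exact hanti hx (le_trans hx hu) hu
  simp only [hh] at hnn
  linarith

/-- For every `δ` there is a window length `c`, independent of `K`, such that the maximum of `K`
standard Gaussians lies in some window `(a, a + c]` up to probability `2δ`. -/
lemma exists_window {δ : ℝ} (h0 : 0 < δ) (h1 : δ < 1) :
    ∃ c, 0 ≤ c ∧ ∀ K : ℕ, 0 < K → ∃ a, stdNormCDF a ^ K ≤ δ ∧
      1 - δ ≤ stdNormCDF (a + c) ^ K := by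
  obtain ⟨x₀, hx₀⟩ := exists_stdNormCDF_pow_eq one_pos h0 h1
  rw [pow_one] at hx₀
  set L := -Real.log δ with hL
  have hLpos : 0 < L := neg_pos.2 (Real.log_neg h0 h1)
  have hLδ : 0 < L / δ := by positivity
  -- `c` is large enough for `c x₀ + c² / 2 ≥ L / δ`, hence `L exp(-(c x₀ + c² / 2)) ≤ δ`.
  set c := 2 * |x₀| + 2 + 2 * (L / δ) with hc
  have habs := abs_nonneg x₀
  have hc0 : 0 ≤ c := by positivity
  have hcx : L / δ ≤ c * x₀ + c ^ 2 / 2 := by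
    have : -|x₀| ≤ x₀ := neg_abs_le x₀
    nlinarith
  refine ⟨c, hc0, fun K hK => ?_⟩
  obtain ⟨a, ha⟩ := exists_stdNormCDF_pow_eq hK h0 h1
  refine ⟨a, ha.le, ?_⟩
  have hax : x₀ ≤ a := by
    rw [← strictMono_stdNormCDF.le_iff_le, hx₀, ← ha]
    exact pow_le_of_le_one (stdNormCDF_pos a).le (stdNormCDF_le_one a) hK.ne'
  have hKQ : K * (1 - stdNormCDF a) ≤ L := by
    have h2 := Real.log_le_sub_one_of_pos (stdNormCDF_pos a)
    rw [hL, ← ha, Real.log_pow, ← mul_neg]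
    gcongr
    linarith
  have hexp : L * Real.exp (-(c * x₀ + c ^ 2 / 2)) ≤ δ := by
    have h3 : L / δ ≤ Real.exp (c * x₀ + c ^ 2 / 2) := by
      have := Real.add_one_le_exp (c * x₀ + c ^ 2 / 2)
      linarith
    rw [Real.exp_neg, ← div_eq_mul_inv, div_le_iff₀ (Real.exp_pos _)]
    rw [div_le_iff₀ h0] at h3
    linarith
  have htail := gaussian_tail_le hc0 hax
  have hbern := one_add_mul_le_pow (a := stdNormCDF (a + c) - 1)
    (by linarith [stdNormCDF_pos (a + c)]) K
  rw [add_sub_cancel] at hbern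
  have h4 : K * (1 - stdNormCDF (a + c)) ≤ δ := by
    calc (K : ℝ) * (1 - stdNormCDF (a + c))
        ≤ K * (Real.exp (-(c * x₀ + c ^ 2 / 2)) * (1 - stdNormCDF a)) := by gcongr
      _ = (K * (1 - stdNormCDF a)) * Real.exp (-(c * x₀ + c ^ 2 / 2)) := by ring
      _ ≤ L * Real.exp (-(c * x₀ + c ^ 2 / 2)) := by gcongr
      _ ≤ δ := hexp
  linarith

/-! ### The distribution function and density of `S_K` -/

/-- The distribution function of `√V₁·max_{k∈[K]} Z_k`, for `K ≥ 1`. -/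
noncomputable def maxGaussCDF (V1 : ℝ) (K : ℕ) (t : ℝ) : ℝ := stdNormCDF (t / Real.sqrt V1) ^ K

lemma hasDerivAt_maxGaussCDF (V1 : ℝ) (K : ℕ) (t : ℝ) :
    HasDerivAt (maxGaussCDF V1 K) (maxGaussPDF V1 K t) t := by
  have h := (((hasDerivAt_stdNormCDF (t / Real.sqrt V1)).comp t
    ((hasDerivAt_id t).div_const (Real.sqrt V1))).pow K)
  refine h.congr_deriv ?_
  simp only [maxGaussPDF, Function.comp, id]
  ring

lemma continuous_maxGaussCDF (V1 : ℝ) (K : ℕ) : Continuous (maxGaussCDF V1 K) :=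
  continuous_iff_continuousAt.2 fun t => (hasDerivAt_maxGaussCDF V1 K t).continuousAt

lemma maxGaussCDF_nonneg (V1 : ℝ) (K : ℕ) (t : ℝ) : 0 ≤ maxGaussCDF V1 K t :=
  pow_nonneg (stdNormCDF_pos _).le K

lemma maxGaussCDF_le_one (V1 : ℝ) (K : ℕ) (t : ℝ) : maxGaussCDF V1 K t ≤ 1 :=
  pow_le_one₀ (stdNormCDF_pos _).le (stdNormCDF_le_one _)

lemma monotone_maxGaussCDF (V1 : ℝ) (K : ℕ) : Monotone (maxGaussCDF V1 K) := fun x y hxy => by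
  have := (stdNormCDF_pos (x / Real.sqrt V1)).le
  unfold maxGaussCDF
  gcongr
  exact strictMono_stdNormCDF.monotone (by gcongr)

lemma integrable_maxGaussCDF (V1 V2 : ℝ) (K : ℕ) (s : ℝ) :
    Integrable (fun z => maxGaussCDF V1 K (s - Real.sqrt V2 * z)) (gaussianReal 0 1) := by
  refine Integrable.of_bound
    ((continuous_maxGaussCDF V1 K).comp (by fun_prop)).aestronglyMeasurable 1
    (ae_of_all _ fun z => ?_)
  rw [Real.norm_of_nonneg (maxGaussCDF_nonneg _ _ _)]
  exact maxGaussCDF_le_one _ _ _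

lemma continuous_maxGaussPDF (V1 : ℝ) (K : ℕ) : Continuous (maxGaussPDF V1 K) := by
  have h1 := continuous_stdNormCDF
  have h2 := continuous_stdNormPDF
  unfold maxGaussPDF
  fun_prop

lemma maxGaussPDF_pos {V1 : ℝ} (hV1 : 0 < V1) {K : ℕ} (hK : 0 < K) (t : ℝ) :
    0 < maxGaussPDF V1 K t := by
  have h1 := stdNormCDF_pos (t / Real.sqrt V1)
  have h2 := stdNormPDF_pos (t / Real.sqrt V1)
  unfold maxGaussPDF
  positivity

lemma maxGaussPDF_nonneg (V1 : ℝ) (K : ℕ) (t : ℝ) : 0 ≤ maxGaussPDF V1 K t := by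
  have h1 := stdNormCDF_pos (t / Real.sqrt V1)
  have h2 := stdNormPDF_pos (t / Real.sqrt V1)
  unfold maxGaussPDF
  positivity

lemma norm_maxGaussPDF_le (V1 : ℝ) (K : ℕ) (t : ℝ) :
    ‖maxGaussPDF V1 K t‖ ≤ (K : ℝ) / Real.sqrt V1 * stdNormPDF 0 := by
  rw [Real.norm_of_nonneg (maxGaussPDF_nonneg V1 K t), maxGaussPDF]
  have h1 : stdNormCDF (t / Real.sqrt V1) ^ (K - 1) ≤ 1 :=
    pow_le_one₀ (stdNormCDF_pos _).le (stdNormCDF_le_one _)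
  have h2 : stdNormPDF (t / Real.sqrt V1) ≤ stdNormPDF 0 :=
    stdNormPDF_le_of_abs_le (by simp)
  have h3 := (stdNormPDF_pos (t / Real.sqrt V1)).le
  have h4 : (K : ℝ) / Real.sqrt V1 * stdNormCDF (t / Real.sqrt V1) ^ (K - 1)
      ≤ (K : ℝ) / Real.sqrt V1 := mul_le_of_le_one_right (by positivity) h1
  gcongr

/-- Conditioning on `Z₀`. -/
lemma FSK_eq_integral {V1 : ℝ} (V2 : ℝ) (hV1 : 0 < V1) {K : ℕ} (hK : 0 < K) (s : ℝ) :
    FSK V1 V2 K s = ∫ z, maxGaussCDF V1 K (s - Real.sqrt V2 * z) ∂(gaussianReal 0 1) := by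
  have hne : Nonempty (Fin K) := ⟨⟨0, hK⟩⟩
  have hσ : 0 < Real.sqrt V1 := Real.sqrt_pos.2 hV1
  set A : Set (ℝ × (Fin K → ℝ)) :=
    {p | ∀ k, Real.sqrt V2 * p.1 + Real.sqrt V1 * p.2 k ≤ s} with hA
  have hAm : MeasurableSet A := by
    rw [hA, Set.ofPred_forall]
    exact MeasurableSet.iInter fun k => measurableSet_le (by fun_prop) measurable_const
  have hset : {ω : Fin (K + 1) → ℝ |
      Real.sqrt V2 * ω 0 + Real.sqrt V1 * (⨆ k : Fin K, ω k.succ) ≤ s}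
      = (MeasurableEquiv.piFinSuccAbove (fun _ => ℝ) 0) ⁻¹' A := by
    ext ω
    have h1 : ∀ y : ℝ, Real.sqrt V2 * ω 0 + Real.sqrt V1 * y ≤ s ↔
        y ≤ (s - Real.sqrt V2 * ω 0) / Real.sqrt V1 := fun y => by
      rw [le_div_iff₀ hσ]
      constructor <;> intro h <;> linarith
    simp only [Set.mem_ofPred_eq, Set.mem_preimage, hA]
    rw [h1, ciSup_le_iff (Set.finite_range _).bddAbove]
    refine forall_congr' fun k => ?_
    rw [← h1]
    simp [Fin.insertNthEquiv, Fin.tail]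
  have hmp := measurePreserving_piFinSuccAbove
    (fun _ : Fin (K + 1) => gaussianReal 0 1) 0
  rw [FSK, hset, hmp.measure_preimage hAm.nullMeasurableSet, Measure.prod_apply hAm,
    integral_eq_lintegral_of_nonneg_ae (ae_of_all _ fun z => maxGaussCDF_nonneg _ _ _)
      ((continuous_maxGaussCDF V1 K).comp (by fun_prop)).aestronglyMeasurable]
  congr 1
  refine lintegral_congr fun z => ?_
  have hpre : Prod.mk z ⁻¹' A
      = Set.univ.pi fun _ : Fin K => Set.Iic ((s - Real.sqrt V2 * z) / Real.sqrt V1) := by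
    ext w
    simp only [hA, Set.mem_preimage, Set.mem_ofPred_eq, Set.mem_univ_pi, Set.mem_Iic]
    refine forall_congr' fun k => ?_
    rw [le_div_iff₀ hσ]
    constructor <;> intro h <;> linarith
  rw [hpre, Measure.pi_pi]
  simp only [Finset.prod_const, Finset.card_univ, Fintype.card_fin, maxGaussCDF, stdNormCDF]
  rw [ENNReal.ofReal_pow ENNReal.toReal_nonneg, ENNReal.ofReal_toReal (measure_ne_top _ _)]

lemma integrable_fSK_integrand (V1 : ℝ) {V2 : ℝ} (hV2 : 0 < V2) (K : ℕ) (s : ℝ) :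
    Integrable fun t => stdNormPDF ((s - t) / Real.sqrt V2) / Real.sqrt V2
      * maxGaussPDF V1 K t := by
  have hσ : 0 < Real.sqrt V2 := Real.sqrt_pos.2 hV2
  have h1 : Integrable fun t => stdNormPDF ((s - t) / Real.sqrt V2) / Real.sqrt V2 :=
    ((integrable_stdNormPDF.comp_div hσ.ne').comp_sub_left s).div_const _
  exact h1.mul_bdd (continuous_maxGaussPDF V1 K).aestronglyMeasurable
    (ae_of_all _ (norm_maxGaussPDF_le V1 K))

/-- The convolution defining the density, after the substitution `t = s - √V₂·z`. -/
lemma fSK_eq_integral (V1 : ℝ) {V2 : ℝ} (hV2 : 0 < V2) (K : ℕ) (s : ℝ) :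
    fSK V1 V2 K s = ∫ z, maxGaussPDF V1 K (s - Real.sqrt V2 * z) ∂(gaussianReal 0 1) := by
  have hσ : 0 < Real.sqrt V2 := Real.sqrt_pos.2 hV2
  rw [integral_gaussianReal_eq_integral_smul one_ne_zero]
  set h : ℝ → ℝ := fun u => stdNormPDF (u / Real.sqrt V2) * maxGaussPDF V1 K (s - u) with hh
  have e1 : fSK V1 V2 K s = ∫ t, (Real.sqrt V2)⁻¹ * h (s - t) := by
    refine integral_congr_ae (ae_of_all _ fun t => ?_)
    simp only [hh, sub_sub_cancel]
    ring
  have e2 : ∀ z, gaussianPDFReal 0 1 z • maxGaussPDF V1 K (s - Real.sqrt V2 * z)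
      = h (Real.sqrt V2 * z) := fun z => by
    simp only [hh, mul_div_cancel_left₀ z hσ.ne', stdNormPDF_eq, smul_eq_mul]
  simp_rw [e2]
  rw [e1, integral_const_mul, integral_sub_left_eq_self h, Measure.integral_comp_mul_left,
    abs_of_pos (inv_pos.2 hσ), smul_eq_mul]

lemma hasDerivAt_FSK {V1 V2 : ℝ} (hV1 : 0 < V1) (hV2 : 0 < V2) {K : ℕ} (hK : 0 < K) (s : ℝ) :
    HasDerivAt (FSK V1 V2 K) (fSK V1 V2 K s) s := by
  rw [fSK_eq_integral V1 hV2, show FSK V1 V2 K = _ from funext (FSK_eq_integral V2 hV1 hK)]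
  refine (hasDerivAt_integral_of_dominated_loc_of_deriv_le
    (F := fun s z => maxGaussCDF V1 K (s - Real.sqrt V2 * z))
    (F' := fun s z => maxGaussPDF V1 K (s - Real.sqrt V2 * z))
    (bound := fun _ => (K : ℝ) / Real.sqrt V1 * stdNormPDF 0)
    univ_mem (Eventually.of_forall fun x => ?_) ?_ ?_ ?_ (integrable_const _) ?_).2
  · exact ((continuous_maxGaussCDF V1 K).comp (by fun_prop)).aestronglyMeasurable
  · exact integrable_maxGaussCDF V1 V2 K s
  · exact ((continuous_maxGaussPDF V1 K).comp (by fun_prop)).aestronglyMeasurable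
  · exact ae_of_all _ fun z x _ => norm_maxGaussPDF_le V1 K _
  · exact ae_of_all _ fun z x _ => (hasDerivAt_maxGaussCDF V1 K _).comp_sub_const x _

lemma continuous_fSK (V1 : ℝ) {V2 : ℝ} (hV2 : 0 < V2) (K : ℕ) : Continuous (fSK V1 V2 K) := by
  rw [show fSK V1 V2 K = _ from funext (fSK_eq_integral V1 hV2 K)]
  refine continuous_of_dominated
    (bound := fun _ => (K : ℝ) / Real.sqrt V1 * stdNormPDF 0) (fun x => ?_)
    (fun x => ae_of_all _ fun z => norm_maxGaussPDF_le V1 K _) (integrable_const _)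
    (ae_of_all _ fun z => (continuous_maxGaussPDF V1 K).comp (by fun_prop))
  exact ((continuous_maxGaussPDF V1 K).comp (by fun_prop)).aestronglyMeasurable

/-- The density at `s` is at least the mass of `√V₁·max_k Z_k` in an interval all of whose points
are within `D` of `s`, times the least value of the `𝒩(0, V₂)` density on `[-D, D]`. -/
lemma le_fSK (V1 : ℝ) {V2 : ℝ} (hV2 : 0 < V2) (K : ℕ) {s p q D : ℝ} (hpq : p ≤ q)
    (hD : ∀ t ∈ Set.Icc p q, |s - t| ≤ D) :
    stdNormPDF (D / Real.sqrt V2) / Real.sqrt V2 * (maxGaussCDF V1 K q - maxGaussCDF V1 K p)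
      ≤ fSK V1 V2 K s := by
  have hσ : 0 < Real.sqrt V2 := Real.sqrt_pos.2 hV2
  have hint := integrable_fSK_integrand V1 hV2 K s
  have hcont := continuous_maxGaussPDF V1 K
  rw [← intervalIntegral.integral_eq_sub_of_hasDerivAt
    (fun x _ => hasDerivAt_maxGaussCDF V1 K x) (hcont.intervalIntegrable p q),
    intervalIntegral.integral_of_le hpq, ← integral_const_mul]
  refine le_trans (setIntegral_mono_on
    (hcont.integrableOn_Ioc.const_mul _) hint.integrableOn measurableSet_Ioc fun t ht => ?_)
    (setIntegral_le_integral hint (ae_of_all _ fun t => ?_))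
  · have h1 : stdNormPDF (D / Real.sqrt V2) ≤ stdNormPDF ((s - t) / Real.sqrt V2) := by
      refine stdNormPDF_le_of_abs_le ?_
      have h2 := hD t (Set.Ioc_subset_Icc_self ht)
      rw [abs_div, abs_div]
      exact div_le_div_of_nonneg_right (h2.trans (le_abs_self D)) (abs_nonneg _)
    have h3 := maxGaussPDF_nonneg V1 K t
    gcongr
  · exact mul_nonneg (div_nonneg (stdNormPDF_pos _).le hσ.le) (maxGaussPDF_nonneg V1 K t)

lemma fSK_pos {V1 V2 : ℝ} (hV1 : 0 < V1) (hV2 : 0 < V2) {K : ℕ} (hK : 0 < K) (s : ℝ) :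
    0 < fSK V1 V2 K s := by
  have hσ : 0 < Real.sqrt V2 := Real.sqrt_pos.2 hV2
  have hpos : ∀ t, 0 < stdNormPDF ((s - t) / Real.sqrt V2) / Real.sqrt V2
      * maxGaussPDF V1 K t := fun t =>
    mul_pos (div_pos (stdNormPDF_pos _) hσ) (maxGaussPDF_pos hV1 hK t)
  rw [fSK, integral_pos_iff_support_of_nonneg (fun t => (hpos t).le)
    (integrable_fSK_integrand V1 hV2 K s)]
  rw [Function.support_eq_univ fun t => (hpos t).ne']
  simp

lemma strictMono_FSK {V1 V2 : ℝ} (hV1 : 0 < V1) (hV2 : 0 < V2) {K : ℕ} (hK : 0 < K) :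
    StrictMono (FSK V1 V2 K) :=
  strictMono_of_deriv_pos fun s => by
    rw [(hasDerivAt_FSK hV1 hV2 hK s).deriv]; exact fSK_pos hV1 hV2 hK s

lemma FSKinv_FSK {V1 V2 : ℝ} (hV1 : 0 < V1) (hV2 : 0 < V2) {K : ℕ} (hK : 0 < K) (s : ℝ) :
    FSKinv V1 V2 K (FSK V1 V2 K s) = s := by
  have : {u | FSK V1 V2 K u ≤ FSK V1 V2 K s} = Set.Iic s := by
    ext u; exact (strictMono_FSK hV1 hV2 hK).le_iff_le
  rw [FSKinv, this, csSup_Iic]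

/-! ### Localization of the quantile -/

/-- Union bound: `S_K ≤ p - √V₂·b` forces `√V₁·max_k Z_k ≤ p` or `Z₀ ≤ -b`. -/
lemma FSK_le {V1 : ℝ} (V2 : ℝ) (hV1 : 0 < V1) {K : ℕ} (hK : 0 < K) (p b : ℝ) :
    FSK V1 V2 K (p - Real.sqrt V2 * b) ≤ maxGaussCDF V1 K p + stdNormCDF (-b) := by
  have hmono := monotone_maxGaussCDF V1 K
  rw [FSK_eq_integral V2 hV1 hK]
  have hind : Integrable ((Set.Iic (-b)).indicator fun _ => (1 : ℝ)) (gaussianReal 0 1) :=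
    (integrable_const _).indicator measurableSet_Iic
  calc _ ≤ ∫ z, maxGaussCDF V1 K p + (Set.Iic (-b)).indicator (fun _ => (1 : ℝ)) z
          ∂(gaussianReal 0 1) := by
        refine integral_mono (integrable_maxGaussCDF V1 V2 K _)
          ((integrable_const _).add hind) fun z => ?_
        by_cases hz : z ≤ -b
        · simp only [Set.indicator_of_mem (show z ∈ Set.Iic (-b) from hz)]
          linarith [maxGaussCDF_le_one V1 K (p - Real.sqrt V2 * b - Real.sqrt V2 * z),
            maxGaussCDF_nonneg V1 K p]
        · simp only [Set.indicator_of_notMem (show z ∉ Set.Iic (-b) from hz), add_zero]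
          apply hmono
          nlinarith [Real.sqrt_nonneg V2]
    _ = _ := by
        rw [integral_add (integrable_const _) hind, integral_indicator_const _ measurableSet_Iic]
        simp [stdNormCDF, measureReal_def]

/-- Independence: `√V₁·max_k Z_k ≤ q` and `Z₀ ≤ b` together force `S_K ≤ q + √V₂·b`. -/
lemma le_FSK {V1 : ℝ} (V2 : ℝ) (hV1 : 0 < V1) {K : ℕ} (hK : 0 < K) (q b : ℝ) :
    maxGaussCDF V1 K q * stdNormCDF b ≤ FSK V1 V2 K (q + Real.sqrt V2 * b) := by
  have hmono := monotone_maxGaussCDF V1 K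
  rw [FSK_eq_integral V2 hV1 hK]
  have hind : Integrable ((Set.Iic b).indicator fun _ => (1 : ℝ)) (gaussianReal 0 1) :=
    (integrable_const _).indicator measurableSet_Iic
  calc _ = ∫ z, maxGaussCDF V1 K q * (Set.Iic b).indicator (fun _ => (1 : ℝ)) z
          ∂(gaussianReal 0 1) := by
        rw [integral_const_mul, integral_indicator_const _ measurableSet_Iic]
        simp [stdNormCDF, measureReal_def]
    _ ≤ _ := by
        refine integral_mono (hind.const_mul _) (integrable_maxGaussCDF V1 V2 K _) fun z => ?_
        by_cases hz : z ≤ b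
        · simp only [Set.indicator_of_mem (show z ∈ Set.Iic b from hz), mul_one]
          apply hmono
          nlinarith [Real.sqrt_nonneg V2]
        · simp only [Set.indicator_of_notMem (show z ∉ Set.Iic b from hz), mul_zero]
          exact maxGaussCDF_nonneg _ _ _

/-- The `ε`-quantile of `S_K` is attained, with the density there bounded below uniformly in `K`. -/
lemma exists_uniform_quantile {ε V1 V2 : ℝ} (hε : ε ∈ Set.Ioo (0 : ℝ) 1)
    (hV1 : 0 < V1) (hV2 : 0 < V2) :
    ∃ γ : ℝ, 0 < γ ∧ ∀ K : ℕ, 0 < K →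
      ∃ s, FSK V1 V2 K s = ε ∧ γ ≤ fSK V1 V2 K s := by
  obtain ⟨hε0, hε1⟩ := hε
  have hσ1 : 0 < Real.sqrt V1 := Real.sqrt_pos.2 hV1
  have hσ2 : 0 < Real.sqrt V2 := Real.sqrt_pos.2 hV2
  obtain ⟨δ, hδ0, hδε, hδε'⟩ : ∃ δ : ℝ, 0 < δ ∧ 2 * δ < ε ∧ 2 * δ < 1 - ε := by
    refine ⟨min ε (1 - ε) / 4, ?_, ?_, ?_⟩
    · have := lt_min hε0 (sub_pos.2 hε1); positivity
    · linarith [min_le_left ε (1 - ε)]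
    · linarith [min_le_right ε (1 - ε)]
  obtain ⟨c, hc0, hc⟩ := exists_window hδ0 (by linarith)
  obtain ⟨b, hb1, hb2⟩ : ∃ b, 1 - δ ≤ stdNormCDF b ∧ stdNormCDF (-b) ≤ δ :=
    ((tendsto_stdNormCDF_atTop.eventually_const_le (by linarith)).and
      ((tendsto_stdNormCDF_atBot.comp tendsto_neg_atTop_atBot).eventually_le_const hδ0)).exists
  set D := Real.sqrt V1 * c + Real.sqrt V2 * b with hD
  refine ⟨stdNormPDF (D / Real.sqrt V2) / Real.sqrt V2 * (1 - 2 * δ),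
    mul_pos (div_pos (stdNormPDF_pos _) hσ2) (by linarith), fun K hK => ?_⟩
  obtain ⟨a, ha, hac⟩ := hc K hK
  set p := Real.sqrt V1 * a with hp
  set q := Real.sqrt V1 * (a + c) with hq
  have hGp : maxGaussCDF V1 K p ≤ δ := by
    rwa [maxGaussCDF, hp, mul_div_cancel_left₀ _ hσ1.ne']
  have hGq : 1 - δ ≤ maxGaussCDF V1 K q := by
    rwa [maxGaussCDF, hq, mul_div_cancel_left₀ _ hσ1.ne']
  have hqp : q = p + Real.sqrt V1 * c := by rw [hq, hp]; ring
  have hlo : FSK V1 V2 K (p - Real.sqrt V2 * b) < ε :=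
    lt_of_le_of_lt (FSK_le V2 hV1 hK p b) (by linarith)
  have hhi : ε < FSK V1 V2 K (q + Real.sqrt V2 * b) :=
    lt_of_lt_of_le (by nlinarith) (le_FSK V2 hV1 hK q b)
  have hcont : Continuous (FSK V1 V2 K) :=
    continuous_iff_continuousAt.2 fun s => (hasDerivAt_FSK hV1 hV2 hK s).continuousAt
  obtain ⟨s, hs⟩ := mem_range_of_exists_le_of_exists_ge hcont ⟨_, hlo.le⟩ ⟨_, hhi.le⟩
  have hmono := strictMono_FSK hV1 hV2 hK
  have hs1 : p - Real.sqrt V2 * b < s := hmono.lt_iff_lt.1 (hs ▸ hlo)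
  have hs2 : s < q + Real.sqrt V2 * b := hmono.lt_iff_lt.1 (hs ▸ hhi)
  refine ⟨s, hs, le_trans ?_ (le_fSK V1 hV2 K (p := p) (q := q) (D := D) ?_ ?_)⟩
  · refine mul_le_mul_of_nonneg_left (by linarith) (div_nonneg (stdNormPDF_pos _).le hσ2.le)
  · rw [hqp]; nlinarith
  · intro t ht
    rw [abs_le]
    constructor <;> linarith [ht.1, ht.2]

/-- Fix `ε ∈ (0,1)` and `V₁, V₂ > 0`. There is a constant `γ > 0` such that
for every positive integer `K` the density `f_{S_K}` of `S_K` satisfies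
`f_{S_K}(F_{S_K}^{-1}(ε)) ≥ γ`; consequently `F_{S_K}^{-1}` is differentiable at `p = ε` with
derivative `1 / f_{S_K}(F_{S_K}^{-1}(ε))`, and `sup_{K≥1} (d/dp)F_{S_K}^{-1}(p)|_{p=ε} < ∞`. -/
theorem fSK_lower_bound_and_inv_cdf_deriv (ε V1 V2 : ℝ) (hε : ε ∈ Set.Ioo (0 : ℝ) 1)
    (hV1 : 0 < V1) (hV2 : 0 < V2) :
    ∃ γ : ℝ, 0 < γ ∧
      (∀ K : ℕ, 0 < K →
        γ ≤ fSK V1 V2 K (FSKinv V1 V2 K ε) ∧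
        HasDerivAt (fun p => FSKinv V1 V2 K p)
          (1 / fSK V1 V2 K (FSKinv V1 V2 K ε)) ε) ∧
      ∃ B : ℝ, ∀ K : ℕ, 0 < K → 1 / fSK V1 V2 K (FSKinv V1 V2 K ε) ≤ B := by
  obtain ⟨γ, hγ, h⟩ := exists_uniform_quantile hε hV1 hV2
  have hγK : ∀ K : ℕ, 0 < K → γ ≤ fSK V1 V2 K (FSKinv V1 V2 K ε) := fun K hK => by
    obtain ⟨s, hs, hsγ⟩ := h K hK
    rwa [← hs, FSKinv_FSK hV1 hV2 hK]
  refine ⟨γ, hγ, fun K hK => ⟨hγK K hK, ?_⟩, 1 / γ, fun K hK =>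
    one_div_le_one_div_of_le hγ (hγK K hK)⟩
  obtain ⟨s, hs, -⟩ := h K hK
  have hstrict : HasStrictDerivAt (FSK V1 V2 K) (fSK V1 V2 K s) s :=
    hasStrictDerivAt_of_hasDerivAt_of_continuousAt
      (Eventually.of_forall (hasDerivAt_FSK hV1 hV2 hK)) (continuous_fSK V1 hV2 K).continuousAt
  rw [← hs, FSKinv_FSK hV1 hV2 hK, one_div]
  exact (hstrict.to_local_left_inverse (fSK_pos hV1 hV2 hK s).ne'
    (Eventually.of_forall (FSKinv_FSK hV1 hV2 hK))).hasDerivAt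
end

section
/- Let Q(w)=1−Φ(w), where Φ is the standard Gaussian CDF. For every w ≥ 0 and every λ with 0 ≤ λ ≤ 3/4, Q(w)·(1−λ) ≥ Q(w+2λ). -/
/-- The standard Gaussian complementary CDF `Q(w) = 1 - Φ(w)`. -/
noncomputable def stdNormQ (w : ℝ) : ℝ := 1 - stdNormCDF w

open MeasureTheory ProbabilityTheory Set Real

/-- The standard Gaussian density. -/
noncomputable def stdDensity : ℝ → ℝ := gaussianPDFReal 0 1

lemma stdDensity_eq (x : ℝ) : stdDensity x = (√(2 * π))⁻¹ * exp (-(1 / 2) * x ^ 2) := by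
  simp only [stdDensity, gaussianPDFReal, NNReal.coe_one]
  ring_nf

lemma stdDensity_nonneg (x : ℝ) : 0 ≤ stdDensity x := gaussianPDFReal_nonneg 0 1 x

lemma integrable_stdDensity : Integrable stdDensity := integrable_gaussianPDFReal 0 1

lemma stdNormQ_eq (w : ℝ) : stdNormQ w = ∫ x in Ioi w, stdDensity x := by
  have h := prob_compl_eq_one_sub (μ := gaussianReal 0 1) (measurableSet_Iic (a := w))
  have h2 : stdNormQ w = (gaussianReal 0 1 (Ioi w)).toReal := by
    rw [← compl_Iic, h, ENNReal.toReal_sub_of_le prob_le_one ENNReal.one_ne_top]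
    simp [stdNormQ, stdNormCDF]
  rw [h2, gaussianReal_apply_eq_integral 0 one_ne_zero, ENNReal.toReal_ofReal]
  · rfl
  · exact integral_nonneg fun x => stdDensity_nonneg x

lemma stdNormQ_zero : stdNormQ 0 = 1 / 2 := by
  rw [stdNormQ_eq]
  simp_rw [stdDensity_eq]
  rw [integral_const_mul, integral_gaussian_Ioi]
  have h : π / (1 / 2) = 2 * π := by ring
  have h' : √(2 * π) ≠ 0 := by positivity
  rw [h]
  field_simp

lemma stdNormQ_nonneg (w : ℝ) : 0 ≤ stdNormQ w := by
  rw [stdNormQ_eq]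
  exact integral_nonneg fun x => stdDensity_nonneg x

lemma stdNormQ_add (w d : ℝ) : stdNormQ (w + d) = ∫ t in Ioi d, stdDensity (w + t) := by
  rw [stdNormQ_eq]
  have h := (measurePreserving_add_left volume w).setIntegral_preimage_emb
    (measurableEmbedding_addLeft w) stdDensity (Ioi (w + d))
  rw [← h]
  simp

lemma setIntegral_Ioi_split {f : ℝ → ℝ} (hf : Integrable f) {d : ℝ} (hd : 0 ≤ d) :
    ∫ t in Ioi 0, f t = (∫ t in Ioc 0 d, f t) + ∫ t in Ioi d, f t := by
  rw [← Ioc_union_Ioi_eq_Ioi hd]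
  refine setIntegral_union ?_ measurableSet_Ioi hf.integrableOn hf.integrableOn
  rw [Set.disjoint_left]
  intro x hx hx'
  exact absurd hx.2 (not_le.mpr hx')

lemma stdDensity_add (w t : ℝ) :
    stdDensity (w + t) = exp (-(w ^ 2 / 2) - w * t) * stdDensity t := by
  rw [stdDensity_eq, stdDensity_eq, mul_left_comm, ← exp_add]
  ring_nf

/-- The conditional tail `Q (w + d) / Q w` is at most its value `Q d / Q 0` at `w = 0`. -/
lemma stdNormQ_add_le {w d : ℝ} (hw : 0 ≤ w) (hd : 0 ≤ d) :
    stdNormQ (w + d) ≤ 2 * stdNormQ d * stdNormQ w := by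
  have hint : Integrable fun t => stdDensity (w + t) := integrable_stdDensity.comp_add_left w
  have hA : stdNormQ (w + d) ≤ exp (-(w ^ 2 / 2) - w * d) * stdNormQ d := by
    rw [stdNormQ_add, stdNormQ_eq d, ← integral_const_mul]
    refine setIntegral_mono_on hint.integrableOn
      (integrable_stdDensity.const_mul _).integrableOn measurableSet_Ioi fun t ht => ?_
    rw [stdDensity_add]
    refine mul_le_mul_of_nonneg_right (exp_le_exp.mpr ?_) (stdDensity_nonneg t)
    have := mul_le_mul_of_nonneg_left (le_of_lt (mem_Ioi.mp ht)) hw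
    linarith
  have hB : exp (-(w ^ 2 / 2) - w * d) * (∫ t in Ioc 0 d, stdDensity t)
      ≤ ∫ t in Ioc 0 d, stdDensity (w + t) := by
    rw [← integral_const_mul]
    refine setIntegral_mono_on (integrable_stdDensity.const_mul _).integrableOn
      hint.integrableOn measurableSet_Ioc fun t ht => ?_
    rw [stdDensity_add]
    refine mul_le_mul_of_nonneg_right (exp_le_exp.mpr ?_) (stdDensity_nonneg t)
    have := mul_le_mul_of_nonneg_left ht.2 hw
    linarith
  have hw0 := setIntegral_Ioi_split hint hd
  have h00 := setIntegral_Ioi_split integrable_stdDensity hd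
  rw [← stdNormQ_add, ← stdNormQ_add, add_zero] at hw0
  rw [← stdNormQ_eq, ← stdNormQ_eq, stdNormQ_zero] at h00
  have hP : 0 ≤ ∫ t in Ioc 0 d, stdDensity t := integral_nonneg fun t => stdDensity_nonneg t
  have h1 := mul_le_mul_of_nonneg_right hA hP
  have h2 := mul_le_mul_of_nonneg_left hB (stdNormQ_nonneg d)
  have h3 : (∫ t in Ioc 0 d, stdDensity t) = 1 / 2 - stdNormQ d := by linarith
  have h4 : (∫ t in Ioc 0 d, stdDensity (w + t)) = stdNormQ w - stdNormQ (w + d) := by linarith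
  rw [h3] at h1 h2
  rw [h4] at h2
  linarith

lemma quarter_le_integral {d : ℝ} (hd : 0 ≤ d) (hd' : d ≤ 3 / 2) :
    d / 4 ≤ ∫ t in Ioc 0 d, stdDensity t := by
  -- `251 / 100` is a rational upper bound for `√(2π)`.
  have hs : (100 / 251 : ℝ) ≤ (√(2 * π))⁻¹ := by
    have hle : √(2 * π) ≤ 251 / 100 := by
      rw [sqrt_le_left (by norm_num)]
      linarith [pi_lt_d4]
    have := inv_anti₀ (by positivity) hle
    linarith
  have hmono : ∫ t in (0 : ℝ)..d, (100 / 251 : ℝ) * (1 - t ^ 2 / 2 + t ^ 4 / 16)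
      ≤ ∫ t in (0 : ℝ)..d, stdDensity t := by
    refine intervalIntegral.integral_mono_on hd (Continuous.intervalIntegrable (by fun_prop) _ _)
      integrable_stdDensity.intervalIntegrable fun t ht => ?_
    rw [stdDensity_eq]
    have ht2 : t ^ 2 ≤ 9 / 4 := by nlinarith [ht.1, ht.2]
    have h1 : 1 - t ^ 2 / 4 ≤ exp (-(t ^ 2 / 4)) := one_sub_le_exp_neg _
    have h2 : (1 - t ^ 2 / 4) ^ 2 ≤ exp (-(t ^ 2 / 4)) ^ 2 :=
      pow_le_pow_left₀ (by linarith) h1 2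
    rw [← exp_nat_mul] at h2
    have h3 : ((2 : ℕ) : ℝ) * -(t ^ 2 / 4) = -(1 / 2) * t ^ 2 := by push_cast; ring
    rw [h3] at h2
    have h4 : 1 - t ^ 2 / 2 + t ^ 4 / 16 = (1 - t ^ 2 / 4) ^ 2 := by ring
    rw [h4]
    exact mul_le_mul hs h2 (sq_nonneg _) (by positivity)
  have hval : ∫ t in (0 : ℝ)..d, (100 / 251 : ℝ) * (1 - t ^ 2 / 2 + t ^ 4 / 16)
      = 100 / 251 * (d - d ^ 3 / 6 + d ^ 5 / 80) := by
    rw [intervalIntegral.integral_const_mul, intervalIntegral.integral_add,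
      intervalIntegral.integral_sub, intervalIntegral.integral_div,
      intervalIntegral.integral_div, integral_pow, integral_pow]
    · simp
      ring
    all_goals exact Continuous.intervalIntegrable (by fun_prop) _ _
  rw [hval, intervalIntegral.integral_of_le hd] at hmono
  refine le_trans ?_ hmono
  have hu : d ^ 2 ≤ 9 / 4 := by nlinarith
  have hpoly : 251 / 400 ≤ 1 - d ^ 2 / 6 + (d ^ 2) ^ 2 / 80 := by
    nlinarith [sq_nonneg (d ^ 2 - 9 / 4)]
  have := mul_le_mul_of_nonneg_left hpoly hd
  linarith [show d * (1 - d ^ 2 / 6 + (d ^ 2) ^ 2 / 80) = d - d ^ 3 / 6 + d ^ 5 / 80 by ring]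

/-- For every `w ≥ 0` and every `λ` with `0 ≤ λ ≤ 3/4`,
`Q(w)·(1−λ) ≥ Q(w+2λ)`. -/
theorem stdNormQ_mul_one_sub_ge (w lam : ℝ) (hw : 0 ≤ w) (hlam0 : 0 ≤ lam)
    (hlam : lam ≤ 3 / 4) :
    stdNormQ (w + 2 * lam) ≤ stdNormQ w * (1 - lam) := by
  have hd : 0 ≤ 2 * lam := by linarith
  have h := stdNormQ_add_le hw hd
  have hq := quarter_le_integral hd (by linarith)
  have h00 := setIntegral_Ioi_split integrable_stdDensity hd
  rw [← stdNormQ_eq, ← stdNormQ_eq, stdNormQ_zero] at h00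
  have hQ : 2 * stdNormQ (2 * lam) ≤ 1 - lam := by linarith
  have := mul_le_mul_of_nonneg_right hQ (stdNormQ_nonneg w)
  linarith
end

section
/- Let Y and Z be independent real-valued random variables whose CDFs F_Y, F_Z are continuous and strictly increasing, and let X = Y+Z. Then for every ε∈(0,1): F_Y^{-1}(ε/2) + F_Z^{-1}(ε/2) ≤ F_X^{-1}(ε) ≤ F_Y^{-1}((1+ε)/2) + F_Z^{-1}((1+ε)/2). -/
/-! Since `F_Y` is continuous and strictly increasing with limits `0` and `1`, every `p ∈ (0,1)`
is attained at a unique point, which is `F_Y⁻¹(p)`. Both bounds then come from union bounds: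
`{Y + Z ≤ y + z} ⊆ {Y ≤ y} ∪ {Z ≤ z}` gives `F_X(y + z) ≤ F_Y(y) + F_Z(z)`
(`sumCDF_add_le`), and `{Y ≤ y} ∩ {Z ≤ z} ⊆ {Y + Z ≤ y + z}` gives
`F_Y(y) + F_Z(z) - 1 ≤ F_X(y + z)` (`le_sumCDF_add`). The first places
`F_Y⁻¹(ε/2) + F_Z⁻¹(ε/2)` in `{s | F_X(s) ≤ ε}`; the second and strict monotonicity make
`F_Y⁻¹((1+ε)/2) + F_Z⁻¹((1+ε)/2)` an upper bound of that set. -/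

open MeasureTheory

/-- The CDF of a (probability) measure on `ℝ`. -/
noncomputable def cdfOfMeasure (μ : Measure ℝ) (s : ℝ) : ℝ := (μ (Set.Iic s)).toReal

/-- The inverse CDF `F⁻¹(p) = sup {s : F(s) ≤ p}`. -/
noncomputable def invCDF (F : ℝ → ℝ) (p : ℝ) : ℝ := sSup {s | F s ≤ p}

/-- The CDF of the sum `X = Y + Z` of independent random variables with distributions
`μ` and `ν` (independence is encoded by the product measure). -/
noncomputable def sumCDF (μ ν : Measure ℝ) (s : ℝ) : ℝ :=
  ((μ.prod ν) {p : ℝ × ℝ | p.1 + p.2 ≤ s}).toReal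

/-- The inverse CDF of a continuous strictly increasing CDF is a genuine inverse on `(0,1)`. -/
lemma cdfOfMeasure_invCDF (μ : Measure ℝ) [IsProbabilityMeasure μ]
    (hc : Continuous (cdfOfMeasure μ)) (hm : StrictMono (cdfOfMeasure μ))
    {p : ℝ} (hp : p ∈ Set.Ioo (0 : ℝ) 1) :
    cdfOfMeasure μ (invCDF (cdfOfMeasure μ) p) = p := by
  have hcdf : cdfOfMeasure μ = ProbabilityTheory.cdf μ := by
    funext s
    rw [ProbabilityTheory.cdf_eq_real]
    rfl
  obtain ⟨a, ha⟩ : ∃ a, cdfOfMeasure μ a < p := by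
    rw [hcdf]
    exact ((ProbabilityTheory.tendsto_cdf_atBot μ).eventually_lt_const hp.1).exists
  obtain ⟨b, hb⟩ : ∃ b, p < cdfOfMeasure μ b := by
    rw [hcdf]
    exact ((ProbabilityTheory.tendsto_cdf_atTop μ).eventually_const_lt hp.2).exists
  obtain ⟨y, rfl⟩ := mem_range_of_exists_le_of_exists_ge hc ⟨a, ha.le⟩ ⟨b, hb.le⟩
  have hset : {s | cdfOfMeasure μ s ≤ cdfOfMeasure μ y} = Set.Iic y := by
    ext s
    exact hm.le_iff_le
  rw [invCDF, hset, csSup_Iic]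

lemma prod_real_fst_preimage (μ ν : Measure ℝ) [IsProbabilityMeasure μ]
    [IsProbabilityMeasure ν] (y : ℝ) :
    (μ.prod ν).real (Prod.fst ⁻¹' Set.Iic y) = cdfOfMeasure μ y := by
  rw [← Set.prod_univ, measureReal_prod_prod]
  simp [cdfOfMeasure, Measure.real]

lemma prod_real_snd_preimage (μ ν : Measure ℝ) [IsProbabilityMeasure μ]
    [IsProbabilityMeasure ν] (z : ℝ) :
    (μ.prod ν).real (Prod.snd ⁻¹' Set.Iic z) = cdfOfMeasure ν z := by
  rw [← Set.univ_prod, measureReal_prod_prod]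
  simp [cdfOfMeasure, Measure.real]

lemma sumCDF_add_le (μ ν : Measure ℝ) [IsProbabilityMeasure μ] [IsProbabilityMeasure ν]
    (y z : ℝ) : sumCDF μ ν (y + z) ≤ cdfOfMeasure μ y + cdfOfMeasure ν z := by
  rw [← prod_real_fst_preimage μ ν, ← prod_real_snd_preimage μ ν]
  refine le_trans (measureReal_mono ?_) (measureReal_union_le _ _)
  rintro ⟨a, b⟩ (h : a + b ≤ y + z)
  by_contra! hab
  simp only [Set.mem_union, Set.mem_preimage, Set.mem_Iic, not_or, not_le] at hab
  linarith [hab.1, hab.2]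

lemma le_sumCDF_add (μ ν : Measure ℝ) [IsProbabilityMeasure μ] [IsProbabilityMeasure ν]
    (y z : ℝ) : cdfOfMeasure μ y + cdfOfMeasure ν z - 1 ≤ sumCDF μ ν (y + z) := by
  rw [← prod_real_fst_preimage μ ν, ← prod_real_snd_preimage μ ν]
  have hsum := measureReal_union_add_inter (μ := μ.prod ν)
    (s := Prod.fst ⁻¹' Set.Iic y)
    (measurable_snd (measurableSet_Iic (a := z)) :
      MeasurableSet ((Prod.snd : ℝ × ℝ → ℝ) ⁻¹' Set.Iic z))
  have hone : (μ.prod ν).real (Prod.fst ⁻¹' Set.Iic y ∪ Prod.snd ⁻¹' Set.Iic z) ≤ 1 :=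
    measureReal_le_one
  have hinter : (μ.prod ν).real (Prod.fst ⁻¹' Set.Iic y ∩ Prod.snd ⁻¹' Set.Iic z) ≤
      sumCDF μ ν (y + z) := by
    refine measureReal_mono ?_
    rintro ⟨a, b⟩ ⟨ha : a ≤ y, hb : b ≤ z⟩
    exact add_le_add ha hb
  linarith

/-- Let `Y` and `Z` be independent real random variables whose CDFs are
continuous and strictly increasing, and let `X = Y + Z`. Then for every `ε ∈ (0,1)`:
`F_Y^{-1}(ε/2) + F_Z^{-1}(ε/2) ≤ F_X^{-1}(ε) ≤ F_Y^{-1}((1+ε)/2) + F_Z^{-1}((1+ε)/2)`. -/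
theorem invCDF_sum_bounds (μ ν : Measure ℝ)
    [IsProbabilityMeasure μ] [IsProbabilityMeasure ν]
    (hYc : Continuous (cdfOfMeasure μ)) (hYm : StrictMono (cdfOfMeasure μ))
    (hZc : Continuous (cdfOfMeasure ν)) (hZm : StrictMono (cdfOfMeasure ν))
    (ε : ℝ) (hε : ε ∈ Set.Ioo (0 : ℝ) 1) :
    invCDF (cdfOfMeasure μ) (ε / 2) + invCDF (cdfOfMeasure ν) (ε / 2) ≤
        invCDF (sumCDF μ ν) ε ∧
      invCDF (sumCDF μ ν) ε ≤
        invCDF (cdfOfMeasure μ) ((1 + ε) / 2) + invCDF (cdfOfMeasure ν) ((1 + ε) / 2) := by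
  obtain ⟨h0, h1⟩ := hε
  have hlo : ε / 2 ∈ Set.Ioo (0 : ℝ) 1 := ⟨by linarith, by linarith⟩
  have hhi : (1 + ε) / 2 ∈ Set.Ioo (0 : ℝ) 1 := ⟨by linarith, by linarith⟩
  have hmem : invCDF (cdfOfMeasure μ) (ε / 2) + invCDF (cdfOfMeasure ν) (ε / 2) ∈
      {s | sumCDF μ ν s ≤ ε} := by
    refine (sumCDF_add_le μ ν _ _).trans ?_
    rw [cdfOfMeasure_invCDF μ hYc hYm hlo, cdfOfMeasure_invCDF ν hZc hZm hlo, add_halves]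
  have hub : invCDF (cdfOfMeasure μ) ((1 + ε) / 2) + invCDF (cdfOfMeasure ν) ((1 + ε) / 2) ∈
      upperBounds {s | sumCDF μ ν s ≤ ε} := by
    intro s (hs : sumCDF μ ν s ≤ ε)
    have hY := cdfOfMeasure_invCDF μ hYc hYm hhi
    have hZ := cdfOfMeasure_invCDF ν hZc hZm hhi
    set y := invCDF (cdfOfMeasure μ) ((1 + ε) / 2)
    set z := invCDF (cdfOfMeasure ν) ((1 + ε) / 2)
    by_contra! hlt
    -- Splitting the excess `s - (y + z)` evenly moves both coordinates strictly past the quantiles.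
    have hle := le_sumCDF_add μ ν (y + (s - (y + z)) / 2) (z + (s - (y + z)) / 2)
    have hyy : cdfOfMeasure μ y < cdfOfMeasure μ (y + (s - (y + z)) / 2) :=
      hYm (by linarith)
    have hzz : cdfOfMeasure ν z < cdfOfMeasure ν (z + (s - (y + z)) / 2) :=
      hZm (by linarith)
    rw [show y + (s - (y + z)) / 2 + (z + (s - (y + z)) / 2) = s by ring] at hle
    linarith
  exact ⟨le_csSup ⟨_, hub⟩ hmem, csSup_le ⟨_, hmem⟩ hub⟩
end

section
/- Let Φ denote the standard Gaussian CDF and V>0, 0<γ<V. Then: (i) for every z ≥ 0, Φ(z/√(V−γ)) ≤ Φ(z/√V) + (√(V/(V−γ)) − 1)/√(2πe); and (ii) for every z ≤ 0, Φ(z/√(V+γ)) ≤ Φ(z/√V) + (√((V+γ)/V) − 1)/√(2πe). Consequently, for every real z, max_{V'∈[V−γ,V+γ]} Φ(z/√V') ≤ Φ(z/√V) + max{√(V/(V−γ))−1, √((V+γ)/V)−1}/√(2πe). -/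
open ProbabilityTheory MeasureTheory

lemma stdNormCDF_mono {a b : ℝ} (h : a ≤ b) : stdNormCDF a ≤ stdNormCDF b :=
  ENNReal.toReal_mono (measure_ne_top _ _) (measure_mono (Set.Iic_subset_Iic.2 h))

lemma stdNormCDF_increment_le {a b M : ℝ} (h : a ≤ b)
    (hM : ∀ x ∈ Set.Ioc a b, gaussianPDFReal 0 1 x ≤ M) :
    stdNormCDF b ≤ stdNormCDF a + (b - a) * M := by
  have hsplit : stdNormCDF b = stdNormCDF a + (gaussianReal 0 1).real (Set.Ioc a b) := by
    change (gaussianReal 0 1).real (Set.Iic b) = (gaussianReal 0 1).real (Set.Iic a) + _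
    rw [← Set.Iic_union_Ioc_eq_Iic h]
    exact measureReal_union (Set.Iic_disjoint_Ioc le_rfl) measurableSet_Ioc
  have hint : (gaussianReal 0 1).real (Set.Ioc a b)
      = ∫ x in Set.Ioc a b, gaussianPDFReal 0 1 x := by
    rw [Measure.real, gaussianReal_apply_eq_integral 0 one_ne_zero]
    exact ENNReal.toReal_ofReal
      (setIntegral_nonneg measurableSet_Ioc fun x _ => gaussianPDFReal_nonneg 0 1 x)
  have hle : ∫ x in Set.Ioc a b, gaussianPDFReal 0 1 x ≤ ∫ _ in Set.Ioc a b, M :=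
    setIntegral_mono_on (integrable_gaussianPDFReal 0 1).integrableOn
      (integrableOn_const (by simp)) measurableSet_Ioc hM
  rw [setIntegral_const, smul_eq_mul, Real.volume_real_Ioc_of_le h] at hle
  linarith

lemma gaussianPDFReal_le_of_le_abs {t x : ℝ} (ht : 0 ≤ t) (h : t ≤ |x|) :
    gaussianPDFReal 0 1 x ≤ gaussianPDFReal 0 1 t := by
  have hsq : t ^ 2 ≤ x ^ 2 := by
    rw [← sq_abs x]
    gcongr
  simp only [gaussianPDFReal_def, sub_zero, NNReal.coe_one, mul_one]
  gcongr

/-- The bound `sup_t t * φ t ≤ 1 / √(2πe)`, from `t ≤ (t² + 1) / 2 ≤ exp ((t² - 1) / 2)`. -/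
lemma mul_gaussianPDFReal_le (t : ℝ) :
    t * gaussianPDFReal 0 1 t ≤ 1 / Real.sqrt (2 * Real.pi * Real.exp 1) := by
  have h1 : t ≤ Real.exp ((t ^ 2 - 1) / 2) := by
    have := Real.add_one_le_exp ((t ^ 2 - 1) / 2)
    nlinarith [sq_nonneg (t - 1)]
  have h2 : t * Real.exp (-t ^ 2 / 2) ≤ Real.exp (-(1 / 2)) :=
    calc t * Real.exp (-t ^ 2 / 2)
        ≤ Real.exp ((t ^ 2 - 1) / 2) * Real.exp (-t ^ 2 / 2) := by gcongr
      _ = Real.exp (-(1 / 2)) := by rw [← Real.exp_add]; ring_nf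
  have h3 : Real.sqrt (Real.exp 1) = Real.exp (1 / 2) := (Real.exp_half 1).symm
  simp only [gaussianPDFReal_def, sub_zero, NNReal.coe_one, mul_one]
  rw [Real.sqrt_mul (x := 2 * Real.pi) (by positivity) (Real.exp 1), h3, one_div, mul_inv, ← Real.exp_neg]
  calc t * ((Real.sqrt (2 * Real.pi))⁻¹ * Real.exp (-t ^ 2 / 2))
      = (Real.sqrt (2 * Real.pi))⁻¹ * (t * Real.exp (-t ^ 2 / 2)) := by ring
    _ ≤ _ := by gcongr

lemma stdNormCDF_scale_le {t c : ℝ} (ht : 0 ≤ t) (hc : 1 ≤ c) :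
    stdNormCDF (c * t) ≤
      stdNormCDF t + (c - 1) / Real.sqrt (2 * Real.pi * Real.exp 1) := by
  have h := stdNormCDF_increment_le (a := t) (b := c * t) (by nlinarith)
    fun x hx => gaussianPDFReal_le_of_le_abs ht (hx.1.le.trans (le_abs_self x))
  have h' := mul_le_mul_of_nonneg_left (mul_gaussianPDFReal_le t) (sub_nonneg.2 hc)
  rw [mul_one_div] at h'
  linarith

lemma stdNormCDF_neg_scale_le {t c : ℝ} (ht : 0 ≤ t) (hc : 1 ≤ c) :
    stdNormCDF (-t) ≤
      stdNormCDF (-(c * t)) + (c - 1) / Real.sqrt (2 * Real.pi * Real.exp 1) := by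
  have h := stdNormCDF_increment_le (a := -(c * t)) (b := -t) (by nlinarith)
    fun x hx => gaussianPDFReal_le_of_le_abs ht ((le_neg.2 hx.2).trans (neg_le_abs x))
  have h' := mul_le_mul_of_nonneg_left (mul_gaussianPDFReal_le t) (sub_nonneg.2 hc)
  rw [mul_one_div] at h'
  linarith

/-- Let `Φ` denote the standard Gaussian CDF and `V > 0`, `0 < γ < V`. Then:
(i) for every `z ≥ 0`, `Φ(z/√(V−γ)) ≤ Φ(z/√V) + (√(V/(V−γ)) − 1)/√(2πe)`;
(ii) for every `z ≤ 0`, `Φ(z/√(V+γ)) ≤ Φ(z/√V) + (√((V+γ)/V) − 1)/√(2πe)`;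
consequently, for every real `z` and every `V' ∈ [V−γ, V+γ]`,
`Φ(z/√V') ≤ Φ(z/√V) + max{√(V/(V−γ))−1, √((V+γ)/V)−1}/√(2πe)`. -/
theorem stdNormCDF_perturbed_variance_bound (V γ : ℝ) (hV : 0 < V) (hγ0 : 0 < γ)
    (hγV : γ < V) :
    (∀ z : ℝ, 0 ≤ z →
      stdNormCDF (z / Real.sqrt (V - γ)) ≤
        stdNormCDF (z / Real.sqrt V) +
          (Real.sqrt (V / (V - γ)) - 1) / Real.sqrt (2 * Real.pi * Real.exp 1)) ∧
    (∀ z : ℝ, z ≤ 0 →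
      stdNormCDF (z / Real.sqrt (V + γ)) ≤
        stdNormCDF (z / Real.sqrt V) +
          (Real.sqrt ((V + γ) / V) - 1) / Real.sqrt (2 * Real.pi * Real.exp 1)) ∧
    (∀ z : ℝ, ∀ V' ∈ Set.Icc (V - γ) (V + γ),
      stdNormCDF (z / Real.sqrt V') ≤
        stdNormCDF (z / Real.sqrt V) +
          max (Real.sqrt (V / (V - γ)) - 1) (Real.sqrt ((V + γ) / V) - 1) /
            Real.sqrt (2 * Real.pi * Real.exp 1)) := by
  have hsub : 0 < V - γ := sub_pos.2 hγV
  have hadd : 0 < V + γ := by linarith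
  have hs := Real.sqrt_pos.2 hV
  have hs1 := Real.sqrt_pos.2 hsub
  have hs2 := Real.sqrt_pos.2 hadd
  have upper : ∀ z : ℝ, 0 ≤ z →
      stdNormCDF (z / Real.sqrt (V - γ)) ≤
        stdNormCDF (z / Real.sqrt V) +
          (Real.sqrt (V / (V - γ)) - 1) / Real.sqrt (2 * Real.pi * Real.exp 1) := by
    intro z hz
    have hc : 1 ≤ Real.sqrt (V / (V - γ)) :=
      Real.one_le_sqrt.2 ((one_le_div hsub).2 (by linarith))
    have hz' : z / Real.sqrt (V - γ) = Real.sqrt (V / (V - γ)) * (z / Real.sqrt V) := by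
      rw [Real.sqrt_div hV.le]
      field_simp
    rw [hz']
    exact stdNormCDF_scale_le (by positivity) hc
  have lower : ∀ z : ℝ, z ≤ 0 →
      stdNormCDF (z / Real.sqrt (V + γ)) ≤
        stdNormCDF (z / Real.sqrt V) +
          (Real.sqrt ((V + γ) / V) - 1) / Real.sqrt (2 * Real.pi * Real.exp 1) := by
    intro z hz
    have hc : 1 ≤ Real.sqrt ((V + γ) / V) :=
      Real.one_le_sqrt.2 ((one_le_div hV).2 (by linarith))
    have h := stdNormCDF_neg_scale_le (t := -z / Real.sqrt (V + γ))
      (div_nonneg (neg_nonneg.2 hz) hs2.le) hc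
    have hb : -(-z / Real.sqrt (V + γ)) = z / Real.sqrt (V + γ) := by ring
    have ha : -(Real.sqrt ((V + γ) / V) * (-z / Real.sqrt (V + γ))) = z / Real.sqrt V := by
      rw [Real.sqrt_div hadd.le]
      field_simp
    rwa [hb, ha] at h
  refine ⟨upper, lower, fun z V' hV' => ?_⟩
  have hV'0 := Real.sqrt_pos.2 (hsub.trans_le hV'.1)
  rcases le_total 0 z with hz | hz
  · have hmono : z / Real.sqrt V' ≤ z / Real.sqrt (V - γ) :=
      div_le_div_of_nonneg_left hz hs1 (Real.sqrt_le_sqrt hV'.1)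
    refine (stdNormCDF_mono hmono).trans ((upper z hz).trans ?_)
    gcongr
    exact le_max_left _ _
  · have hmono : z / Real.sqrt V' ≤ z / Real.sqrt (V + γ) := by
      have := div_le_div_of_nonneg_left (neg_nonneg.2 hz) hV'0 (Real.sqrt_le_sqrt hV'.2)
      rw [neg_div, neg_div] at this
      linarith
    refine (stdNormCDF_mono hmono).trans ((lower z hz).trans ?_)
    gcongr
    exact le_max_right _ _
end

section
/- Fix ε∈(0,1). Let K be a positive integer, let p ∈ [ε/4, (3+ε)/4], and let y∈ℝ satisfy Φ(y)^K = p (i.e., y is the p-quantile of the maximum of K i.i.d. standard Gaussians). Then the density of that maximum at y satisfies K·Φ(y)^{K−1}·φ(y) ≥ min{ ε²/(16√(2π)), p·ln(1/p)/√(2π) }. -/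
open ProbabilityTheory MeasureTheory

/-- Chernoff bound for the lower tail of the standard Gaussian. -/
lemma stdNormCDF_le_exp {y : ℝ} (hy : y ≤ 0) : stdNormCDF y ≤ Real.exp (-(y ^ 2) / 2) := by
  -- the optimal Chernoff parameter is `t = y`
  have h := measure_le_le_exp_mul_mgf (μ := gaussianReal 0 1) (X := id) y hy
    (integrable_exp_mul_gaussianReal y)
  rw [mgf_id_gaussianReal, ← Real.exp_add] at h
  refine h.trans (Real.exp_le_exp.mpr ?_)
  simp only [NNReal.coe_one]
  linarith

/-- Chernoff bound for the upper tail of the standard Gaussian. -/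
lemma one_sub_stdNormCDF_le_exp {y : ℝ} (hy : 0 ≤ y) :
    1 - stdNormCDF y ≤ Real.exp (-(y ^ 2) / 2) := by
  have h := measure_ge_le_exp_mul_mgf (μ := gaussianReal 0 1) (X := id) y hy
    (integrable_exp_mul_gaussianReal y)
  rw [mgf_id_gaussianReal, ← Real.exp_add] at h
  have h1 : 1 - stdNormCDF y = (gaussianReal 0 1).real (Set.Iic y)ᶜ :=
    (probReal_compl_eq_one_sub measurableSet_Iic).symm
  have h2 : (gaussianReal 0 1).real (Set.Iic y)ᶜ ≤ (gaussianReal 0 1).real {x | y ≤ id x} :=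
    measureReal_mono fun x hx => (not_le.mp (Set.mem_Iic.not.mp hx)).le
  rw [h1]
  refine (h2.trans h).trans (Real.exp_le_exp.mpr ?_)
  simp only [NNReal.coe_one]
  linarith

/-- Fix `ε ∈ (0,1)`. Let `K` be a positive integer, `p ∈ [ε/4, (3+ε)/4]`,
and `y ∈ ℝ` with `Φ(y)^K = p` (so `y` is the `p`-quantile of the max of `K` i.i.d. standard
Gaussians). Then the density of that maximum at `y` satisfies
`K·Φ(y)^{K−1}·φ(y) ≥ min{ε²/(16√(2π)), p·ln(1/p)/√(2π)}`. -/
theorem maxGaussian_density_lower_bound (ε : ℝ) (hε : ε ∈ Set.Ioo (0 : ℝ) 1)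
    (K : ℕ) (hK : 0 < K) (p y : ℝ) (hp : p ∈ Set.Icc (ε / 4) ((3 + ε) / 4))
    (hy : (stdNormCDF y) ^ K = p) :
    min (ε ^ 2 / (16 * Real.sqrt (2 * Real.pi)))
        (p * Real.log (1 / p) / Real.sqrt (2 * Real.pi)) ≤
      (K : ℝ) * (stdNormCDF y) ^ (K - 1) * stdNormPDF y := by
  obtain ⟨hε0, hε1⟩ := hε
  have hp0 : 0 < p := by linarith [hp.1]
  have hΦ0 : 0 ≤ stdNormCDF y := ENNReal.toReal_nonneg
  have hΦ : 0 < stdNormCDF y := by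
    refine lt_of_le_of_ne hΦ0 fun h => ?_
    rw [← h, zero_pow hK.ne'] at hy
    exact hp0.ne hy
  have hK1 : (1 : ℝ) ≤ K := by exact_mod_cast hK
  have hsplit : stdNormCDF y ^ (K - 1) * stdNormCDF y = p := by
    rw [← pow_succ, Nat.sub_add_cancel hK, hy]
  have hcoef : 0 ≤ (K : ℝ) * stdNormCDF y ^ (K - 1) := by positivity
  rw [stdNormPDF, ← mul_div_assoc]
  rcases le_total y 0 with h0 | h0
  · refine (min_le_left _ _).trans ?_
    rw [← div_div]
    gcongr
    calc ε ^ 2 / 16 ≤ 1 * p := by nlinarith [hp.1]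
      _ ≤ K * p := by gcongr
      _ = K * stdNormCDF y ^ (K - 1) * stdNormCDF y := by rw [mul_assoc, hsplit]
      _ ≤ _ := mul_le_mul_of_nonneg_left (stdNormCDF_le_exp h0) hcoef
  · refine (min_le_right _ _).trans ?_
    refine div_le_div_of_nonneg_right ?_ (Real.sqrt_nonneg _)
    have hent : stdNormCDF y * Real.log (1 / stdNormCDF y) ≤ 1 - stdNormCDF y := by
      have := Real.log_le_sub_one_of_pos (one_div_pos.mpr hΦ)
      calc _ ≤ stdNormCDF y * (1 / stdNormCDF y - 1) := by gcongr
        _ = _ := by field_simp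
    calc p * Real.log (1 / p)
        = K * stdNormCDF y ^ (K - 1) * (stdNormCDF y * Real.log (1 / stdNormCDF y)) := by
          have hlog : Real.log (1 / p) = K * Real.log (1 / stdNormCDF y) := by
            rw [← hy, ← one_div_pow, Real.log_pow]
          rw [hlog, ← hsplit]
          ring
      _ ≤ _ := mul_le_mul_of_nonneg_left (hent.trans (one_sub_stdNormCDF_le_exp h0)) hcoef
end

section
/- Fix a MAC with finite alphabets 𝒳₁,𝒳₂,𝒴 and channel p_{Y|X₁,X₂} with p_{Y|X₁,X₂}(y|x₁,x₂)>0 for all x₁,x₂,y, input pmfs p_{X₁},p_{X₂}, positive integers M₁,M₂,K, a score function s:𝒳₁×𝒳₂→ℝ, and thresholds c₁₂*, c₁*, c₂* ∈ ℝ. Draw codewords f₁(m₁,k) for (m₁,k)∈[M₁]×[K] i.i.d. from p_{X₁} and f₂(m₂,k) for (m₂,k)∈[M₂]×[K] i.i.d. from p_{X₂}, all mutually independent. Define the facilitator e(m₁,m₂) = argmax_{k∈[K]} s(f₁(m₁,k), f₂(m₂,k)) (ties broken by smallest index), X_j(m₁,m₂) as the resulting channel inputs, and the decoder g(y) that outputs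 the unique (m₁,m₂) with i(X₁(m₁,m₂),X₂(m₁,m₂);y) ≥ c₁₂*, i(X₁(m₁,m₂);y|X₂(m₁,m₂)) ≥ c₁*, and i(X₂(m₁,m₂);y|X₁(m₁,m₂)) ≥ c₂* (declaring an error if the number of such pairs is not one). Let p_{X̃₁,X̃₂} be the distribution of (X₁(1,1),X₂(1,1)) and let (X̃₁,X̃₂,Ỹ) ~ p_{X̃₁,X̃₂}(x₁,x₂)·p_{Y|X₁,X₂}(y|x₁,x₂). Then the expected average error probability of this random code satisfies E[P_e] ≤ Pr( i(X̃₁,X̃₂;Ỹ) < c₁₂* or i(X̃₁;Ỹ|X̃₂) < c₁* or i(X̃₂;Ỹ|X̃₁) < c₂* ) + M₁M₂K·2^{−c₁₂*} + M₁·2^{−c₁*} + M₂·2^{−c₂*}. -/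
/-!
The error probability of a message pair is bounded by the probability that the transmitted pair
fails the threshold test (its law is `qTilde` by symmetry in the messages, `cbE_selected`) plus
the probabilities that some other pair `(m₁', m₂')` passes it.  Everything rests on redrawing a
single codebook entry (`sum_resample`) and on the Markov bound `tail_bound`: a codeword letter
pair independent of the output passes the joint test with probability at most `2^{-c₁₂}`, and a
first (second) letter that is conditionally independent of the output passes the conditional
test with probability at most `2^{-c₁}` (`2^{-c₂}`).

* If both messages differ, a union bound over the `K` possible indices of the competing pair
  gives `K 2^{-c₁₂}` (`confuse_both`).
* If only `m₁' ≠ m₁`, let `k = e(m₁, m₂)` and `k' = e(m₁', m₂)`.  When `k' = k`, the letter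
  `f₁(m₁', k)` is independent of the codewords of `(m₁, m₂)` and of the output, which gives
  `2^{-c₁}` without a factor `K`.  When `k' ≠ k`, removing the index `k'` does not change the
  maximizer `k`, so the output law is dominated by the one produced by the facilitator restricted
  to the indices other than `k'` (`outExcept`), which is independent of both `f₁(m₁', k')` and
  `f₂(m₂, k')`; a union bound over `k'` gives `K 2^{-c₁₂}` (`confuse_le`, `confuse_first`).
* The case where only `m₂' ≠ m₂` is symmetric (`confuse_second`).

Hence every competing pair contributes at most `K 2^{-c₁₂}`, plus `2^{-c₁}` if it shares `m₂`,
plus `2^{-c₂}` if it shares `m₁`; summing over all pairs gives the bound.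
-/


open scoped BigOperators Classical

noncomputable section

/-- A pmf on a finite type. -/
def IsPMF {α : Type*} [Fintype α] (p : α → ℝ) : Prop :=
  (∀ a, 0 ≤ p a) ∧ ∑ a, p a = 1

variable {X1 X2 Y : Type*} [Fintype X1] [Fintype X2] [Fintype Y]

/-- A discrete memoryless MAC: a conditional pmf `W(y|x₁,x₂)` on finite alphabets. -/
def IsChannel (W : X1 → X2 → Y → ℝ) : Prop :=
  (∀ x1 x2 y, 0 ≤ W x1 x2 y) ∧ ∀ x1 x2, ∑ y, W x1 x2 y = 1

/-- The output marginal `p_Y` induced by a product input pmf `p₁·p₂`. -/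
def outDist (W : X1 → X2 → Y → ℝ) (p1 : X1 → ℝ) (p2 : X2 → ℝ) (y : Y) : ℝ :=
  ∑ x1, ∑ x2, p1 x1 * p2 x2 * W x1 x2 y

/-- The joint information density `i(x₁,x₂;y) = log₂(W(y|x₁,x₂)/p_Y(y))`. -/
def iDens (W : X1 → X2 → Y → ℝ) (p1 : X1 → ℝ) (p2 : X2 → ℝ)
    (x1 : X1) (x2 : X2) (y : Y) : ℝ :=
  Real.logb 2 (W x1 x2 y / outDist W p1 p2 y)

/-- The conditional output marginal `p_{Y|X₂}(y|x₂)`. -/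
def condOut2 (W : X1 → X2 → Y → ℝ) (p1 : X1 → ℝ) (x2 : X2) (y : Y) : ℝ :=
  ∑ x1, p1 x1 * W x1 x2 y

/-- The conditional output marginal `p_{Y|X₁}(y|x₁)`. -/
def condOut1 (W : X1 → X2 → Y → ℝ) (p2 : X2 → ℝ) (x1 : X1) (y : Y) : ℝ :=
  ∑ x2, p2 x2 * W x1 x2 y

/-- The conditional information density `i(x₁;y|x₂)`. -/
def iDensC1 (W : X1 → X2 → Y → ℝ) (p1 : X1 → ℝ) (x1 : X1) (x2 : X2) (y : Y) : ℝ :=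
  Real.logb 2 (W x1 x2 y / condOut2 W p1 x2 y)

/-- The conditional information density `i(x₂;y|x₁)`. -/
def iDensC2 (W : X1 → X2 → Y → ℝ) (p2 : X2 → ℝ) (x1 : X1) (x2 : X2) (y : Y) : ℝ :=
  Real.logb 2 (W x1 x2 y / condOut1 W p2 x1 y)

/-- `i(x₁,x₂) = E[i(x₁,x₂;Y) | X₁=x₁, X₂=x₂] = D(W(·|x₁,x₂) ‖ p_Y)`. -/
def iBar (W : X1 → X2 → Y → ℝ) (p1 : X1 → ℝ) (p2 : X2 → ℝ) (x1 : X1) (x2 : X2) : ℝ :=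
  ∑ y, W x1 x2 y * iDens W p1 p2 x1 x2 y

/-- The mutual information `I(X₁,X₂;Y)` under the product input pmf `p₁·p₂` (log base 2). -/
def Isum (W : X1 → X2 → Y → ℝ) (p1 : X1 → ℝ) (p2 : X2 → ℝ) : ℝ :=
  ∑ x1, ∑ x2, p1 x1 * p2 x2 * iBar W p1 p2 x1 x2

/-- The conditional mutual information `I(X₁;Y|X₂)` under `p₁·p₂`. -/
def Icond1 (W : X1 → X2 → Y → ℝ) (p1 : X1 → ℝ) (p2 : X2 → ℝ) : ℝ :=
  ∑ x1, ∑ x2, ∑ y, p1 x1 * p2 x2 * W x1 x2 y * iDensC1 W p1 x1 x2 y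

/-- The conditional mutual information `I(X₂;Y|X₁)` under `p₁·p₂`. -/
def Icond2 (W : X1 → X2 → Y → ℝ) (p1 : X1 → ℝ) (p2 : X2 → ℝ) : ℝ :=
  ∑ x1, ∑ x2, ∑ y, p1 x1 * p2 x2 * W x1 x2 y * iDensC2 W p2 x1 x2 y

/-- `V₁ = Var(i(X₁,X₂))`, the information variance of the codewords. -/
def Vone (W : X1 → X2 → Y → ℝ) (p1 : X1 → ℝ) (p2 : X2 → ℝ) : ℝ :=
  ∑ x1, ∑ x2, p1 x1 * p2 x2 * (iBar W p1 p2 x1 x2 - Isum W p1 p2) ^ 2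

/-- `V₂ = E[Var(i(X₁,X₂;Y)|X₁,X₂)]`, the information variance of the channel noise. -/
def Vtwo (W : X1 → X2 → Y → ℝ) (p1 : X1 → ℝ) (p2 : X2 → ℝ) : ℝ :=
  ∑ x1, ∑ x2, ∑ y,
    p1 x1 * p2 x2 * W x1 x2 y * (iDens W p1 p2 x1 x2 y - iBar W p1 p2 x1 x2) ^ 2

/-- The average error probability of an `(M₁,M₂,K)` facilitated MAC code (facilitator `e`,
encoders `f₁, f₂`, decoder `g`) on the `n`-fold memoryless product channel. -/
def avgErr (W : X1 → X2 → Y → ℝ) {n M1 M2 K : ℕ}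
    (e : Fin M1 → Fin M2 → Fin K)
    (f1 : Fin M1 → Fin K → Fin n → X1) (f2 : Fin M2 → Fin K → Fin n → X2)
    (g : (Fin n → Y) → Fin M1 × Fin M2) : ℝ :=
  (1 / ((M1 : ℝ) * M2)) * ∑ m1, ∑ m2, ∑ y : Fin n → Y,
    (∏ i, W (f1 m1 (e m1 m2) i) (f2 m2 (e m1 m2) i) (y i)) *
      (if g y = (m1, m2) then 0 else 1)

/-- Existence of an `(n,M₁,M₂,K,ε)` facilitated MAC code. -/
def ExistsCode (W : X1 → X2 → Y → ℝ) (n M1 M2 K : ℕ) (ε : ℝ) : Prop :=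
  ∃ (e : Fin M1 → Fin M2 → Fin K) (f1 : Fin M1 → Fin K → Fin n → X1)
    (f2 : Fin M2 → Fin K → Fin n → X2) (g : (Fin n → Y) → Fin M1 × Fin M2),
    avgErr W e f1 f2 g ≤ ε

/-- The fundamental sum-rate limit `R_sum(n,ε,K)`. -/
def Rsum (W : X1 → X2 → Y → ℝ) (n : ℕ) (ε : ℝ) (K : ℕ) : ℝ :=
  sSup {r | ∃ M1 M2 : ℕ, 0 < M1 ∧ 0 < M2 ∧ ExistsCode W n M1 M2 K ε ∧
    r = Real.logb 2 ((M1 : ℝ) * M2) / n}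

/-- The sum-capacity `C_sum = max_{p₁·p₂} I(X₁,X₂;Y)`. -/
def Csum (W : X1 → X2 → Y → ℝ) : ℝ :=
  sSup {r | ∃ p1 p2, IsPMF p1 ∧ IsPMF p2 ∧ r = Isum W p1 p2}

/-- The index of the largest entry of `v : Fin (K+1) → ℝ`, with ties broken by the smallest
index. -/
def argmaxTie {K : ℕ} (v : Fin (K + 1) → ℝ) : Fin (K + 1) :=
  (Finset.univ.filter fun k => ∀ k', v k' ≤ v k).min' (by
    obtain ⟨b, _, hb⟩ := Finset.exists_max_image (Finset.univ : Finset (Fin (K + 1))) v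
      Finset.univ_nonempty
    exact ⟨b, Finset.mem_filter.mpr ⟨Finset.mem_univ _, fun k' => hb k' (Finset.mem_univ _)⟩⟩)

/-- The cooperation facilitator `e(m₁,m₂) = argmax_{k∈[K]} s(f₁(m₁,k), f₂(m₂,k))`
(ties broken by the smallest index). -/
def facil (s : X1 → X2 → ℝ) {M1 M2 K : ℕ}
    (f1 : Fin (M1 + 1) → Fin (K + 1) → X1) (f2 : Fin (M2 + 1) → Fin (K + 1) → X2)
    (m1 : Fin (M1 + 1)) (m2 : Fin (M2 + 1)) : Fin (K + 1) :=
  argmaxTie fun k => s (f1 m1 k) (f2 m2 k)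

/-- The channel input of transmitter 1 for message pair `(m₁,m₂)`:
`X₁(m₁,m₂) = f₁(m₁, e(m₁,m₂))`. -/
def enc1 (s : X1 → X2 → ℝ) {M1 M2 K : ℕ}
    (f1 : Fin (M1 + 1) → Fin (K + 1) → X1) (f2 : Fin (M2 + 1) → Fin (K + 1) → X2)
    (m1 : Fin (M1 + 1)) (m2 : Fin (M2 + 1)) : X1 :=
  f1 m1 (facil s f1 f2 m1 m2)

/-- The channel input of transmitter 2 for message pair `(m₁,m₂)`:
`X₂(m₁,m₂) = f₂(m₂, e(m₁,m₂))`. -/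
def enc2 (s : X1 → X2 → ℝ) {M1 M2 K : ℕ}
    (f1 : Fin (M1 + 1) → Fin (K + 1) → X1) (f2 : Fin (M2 + 1) → Fin (K + 1) → X2)
    (m1 : Fin (M1 + 1)) (m2 : Fin (M2 + 1)) : X2 :=
  f2 m2 (facil s f1 f2 m1 m2)

/-- The threshold-decoding condition: all three information densities exceed their
thresholds. -/
def goodPair (W : X1 → X2 → Y → ℝ) (p1 : X1 → ℝ) (p2 : X2 → ℝ)
    (c12 c1 c2 : ℝ) (x1 : X1) (x2 : X2) (y : Y) : Prop :=
  c12 ≤ iDens W p1 p2 x1 x2 y ∧ c1 ≤ iDensC1 W p1 x1 x2 y ∧ c2 ≤ iDensC2 W p2 x1 x2 y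

/-- The average error probability of the threshold decoder (which outputs the unique message
pair satisfying `goodPair`, declaring an error when the number of such pairs is not one) for
the code built from codebooks `f₁, f₂` via the facilitator `facil`. -/
def PeCode (W : X1 → X2 → Y → ℝ) (p1 : X1 → ℝ) (p2 : X2 → ℝ) (s : X1 → X2 → ℝ)
    (c12 c1 c2 : ℝ) {M1 M2 K : ℕ}
    (f1 : Fin (M1 + 1) → Fin (K + 1) → X1) (f2 : Fin (M2 + 1) → Fin (K + 1) → X2) : ℝ :=
  (1 / (((M1 : ℝ) + 1) * ((M2 : ℝ) + 1))) * ∑ m1, ∑ m2, ∑ y,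
    W (enc1 s f1 f2 m1 m2) (enc2 s f1 f2 m1 m2) y *
      (if goodPair W p1 p2 c12 c1 c2 (enc1 s f1 f2 m1 m2) (enc2 s f1 f2 m1 m2) y ∧
          (∀ m1' m2', goodPair W p1 p2 c12 c1 c2
              (enc1 s f1 f2 m1' m2') (enc2 s f1 f2 m1' m2') y → (m1', m2') = (m1, m2))
        then (0 : ℝ) else 1)

/-- The i.i.d. codebook-design weight: all entries of `f₁` drawn i.i.d. from `p₁` and all
entries of `f₂` drawn i.i.d. from `p₂`. -/
def cbWeight (p1 : X1 → ℝ) (p2 : X2 → ℝ) {M1 M2 K : ℕ}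
    (f1 : Fin (M1 + 1) → Fin (K + 1) → X1) (f2 : Fin (M2 + 1) → Fin (K + 1) → X2) : ℝ :=
  (∏ m1, ∏ k, p1 (f1 m1 k)) * (∏ m2, ∏ k, p2 (f2 m2 k))

/-- The pmf `p_{X̃₁,X̃₂}` of the selected codeword pair `(X₁(1,1), X₂(1,1))` under the random
code design. -/
def qTilde (p1 : X1 → ℝ) (p2 : X2 → ℝ) (s : X1 → X2 → ℝ)
    (M1 M2 K : ℕ) (x1 : X1) (x2 : X2) : ℝ :=
  ∑ f1 : Fin (M1 + 1) → Fin (K + 1) → X1, ∑ f2 : Fin (M2 + 1) → Fin (K + 1) → X2,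
    cbWeight p1 p2 f1 f2 *
      (if enc1 s f1 f2 0 0 = x1 ∧ enc2 s f1 f2 0 0 = x2 then (1 : ℝ) else 0)

set_option linter.unusedSectionVars false

/-! ### Averages over the random codebooks -/

/-- Expectation over the random i.i.d. codebooks. -/
def cbE (p1 : X1 → ℝ) (p2 : X2 → ℝ) {M1 M2 K : ℕ}
    (F : (Fin (M1 + 1) → Fin (K + 1) → X1) → (Fin (M2 + 1) → Fin (K + 1) → X2) → ℝ) : ℝ :=
  ∑ f1, ∑ f2, cbWeight p1 p2 f1 f2 * F f1 f2

/-- The codebook `f` with the single entry `(m, k)` replaced by `a`. -/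
def setEntry {α : Type*} {M K : ℕ} (f : Fin (M + 1) → Fin (K + 1) → α)
    (m : Fin (M + 1)) (k : Fin (K + 1)) (a : α) : Fin (M + 1) → Fin (K + 1) → α :=
  Function.update f m (Function.update (f m) k a)

lemma setEntry_same {α : Type*} {M K : ℕ} (f : Fin (M + 1) → Fin (K + 1) → α)
    (m : Fin (M + 1)) (k : Fin (K + 1)) (a : α) : setEntry f m k a m k = a := by
  simp [setEntry]

lemma setEntry_row {α : Type*} {M K : ℕ} (f : Fin (M + 1) → Fin (K + 1) → α)
    {m m' : Fin (M + 1)} (h : m' ≠ m) (k : Fin (K + 1)) (a : α) :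
    setEntry f m k a m' = f m' := by
  simp [setEntry, h]

lemma setEntry_col {α : Type*} {M K : ℕ} (f : Fin (M + 1) → Fin (K + 1) → α)
    (m m' : Fin (M + 1)) {k k' : Fin (K + 1)} (h : k' ≠ k) (a : α) :
    setEntry f m k a m' k' = f m' k' := by
  by_cases hm : m' = m
  · subst hm; simp [setEntry, h]
  · rw [setEntry_row f hm]

lemma setEntry_undo {α : Type*} {M K : ℕ} (f : Fin (M + 1) → Fin (K + 1) → α)
    (m : Fin (M + 1)) (k : Fin (K + 1)) (a : α) :
    setEntry (setEntry f m k a) m k (f m k) = f := by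
  simp [setEntry]

lemma weight_swap {α : Type*} {M K : ℕ} (p : α → ℝ) (f : Fin (M + 1) → Fin (K + 1) → α)
    (m : Fin (M + 1)) (k : Fin (K + 1)) (a : α) :
    (∏ i, ∏ j, p (setEntry f m k a i j)) * p (f m k) = (∏ i, ∏ j, p (f i j)) * p a := by
  rw [← Finset.mul_prod_erase _ _ (Finset.mem_univ m),
    ← Finset.mul_prod_erase _ (fun j => p (setEntry f m k a m j)) (Finset.mem_univ k),
    ← Finset.mul_prod_erase _ (fun i => ∏ j, p (f i j)) (Finset.mem_univ m),
    ← Finset.mul_prod_erase _ (fun j => p (f m j)) (Finset.mem_univ k), setEntry_same]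
  have h1 : ∏ j ∈ Finset.univ.erase k, p (setEntry f m k a m j)
      = ∏ j ∈ Finset.univ.erase k, p (f m j) :=
    Finset.prod_congr rfl fun j hj => by rw [setEntry_col f m m (Finset.ne_of_mem_erase hj)]
  have h2 : ∏ i ∈ Finset.univ.erase m, ∏ j, p (setEntry f m k a i j)
      = ∏ i ∈ Finset.univ.erase m, ∏ j, p (f i j) :=
    Finset.prod_congr rfl fun i hi => by rw [setEntry_row f (Finset.ne_of_mem_erase hi)]
  rw [h1, h2]
  ring

/-- An i.i.d. codebook keeps its law when one entry is redrawn.  The involution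
`(f, a) ↦ (f with entry (m, k) set to a, f m k)` preserves the joint weight of the codebook and
the fresh letter `a`. -/
lemma sum_resample {α : Type*} [Fintype α] {M K : ℕ} (p : α → ℝ) (hp : ∑ a, p a = 1)
    (m : Fin (M + 1)) (k : Fin (K + 1)) (F : (Fin (M + 1) → Fin (K + 1) → α) → ℝ) :
    ∑ f, (∏ i, ∏ j, p (f i j)) * F f
      = ∑ f, (∏ i, ∏ j, p (f i j)) * ∑ a, p a * F (setEntry f m k a) := by
  have inv : Function.Involutive
      (fun x : (Fin (M + 1) → Fin (K + 1) → α) × α => (setEntry x.1 m k x.2, x.1 m k)) := by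
    rintro ⟨f, a⟩
    simp only [setEntry_undo, setEntry_same]
  calc ∑ f, (∏ i, ∏ j, p (f i j)) * F f
      = ∑ x : (Fin (M + 1) → Fin (K + 1) → α) × α,
          (∏ i, ∏ j, p (x.1 i j)) * p x.2 * F x.1 := by
        rw [Fintype.sum_prod_type]
        refine Finset.sum_congr rfl fun f _ => ?_
        simp only [mul_right_comm _ (p _) (F f)]
        rw [← Finset.mul_sum, hp, mul_one]
    _ = ∑ x : (Fin (M + 1) → Fin (K + 1) → α) × α,
          (∏ i, ∏ j, p (x.1 i j)) * p x.2 * F (setEntry x.1 m k x.2) := by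
        rw [← (Equiv.sum_comp inv.toPerm _)]
        refine Finset.sum_congr rfl fun x _ => ?_
        simp only [Function.Involutive.coe_toPerm, weight_swap]
    _ = _ := by
        rw [Fintype.sum_prod_type]
        refine Finset.sum_congr rfl fun f _ => ?_
        rw [Finset.mul_sum]
        exact Finset.sum_congr rfl fun a _ => by ring

lemma sum_weight {α : Type*} [Fintype α] {M K : ℕ} (p : α → ℝ) (hp : ∑ a, p a = 1) :
    ∑ f : Fin (M + 1) → Fin (K + 1) → α, ∏ i, ∏ j, p (f i j) = 1 := by
  have h : ∑ r : Fin (K + 1) → α, ∏ j, p (r j) = 1 := by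
    rw [← Fintype.piFinset_univ, ← Finset.prod_univ_sum]; simp [hp]
  rw [← Fintype.piFinset_univ, ← Finset.prod_univ_sum (fun _ => Finset.univ)
    (fun (_ : Fin (M + 1)) (r : Fin (K + 1) → α) => ∏ j, p (r j))]
  simp [h]

section Expectation

variable {M1 M2 K : ℕ} {p1 : X1 → ℝ} {p2 : X2 → ℝ}

lemma cbWeight_nonneg (hp1 : IsPMF p1) (hp2 : IsPMF p2)
    (f1 : Fin (M1 + 1) → Fin (K + 1) → X1) (f2 : Fin (M2 + 1) → Fin (K + 1) → X2) :
    0 ≤ cbWeight p1 p2 f1 f2 :=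
  mul_nonneg (Finset.prod_nonneg fun _ _ => Finset.prod_nonneg fun _ _ => hp1.1 _)
    (Finset.prod_nonneg fun _ _ => Finset.prod_nonneg fun _ _ => hp2.1 _)

lemma cbE_mono (hp1 : IsPMF p1) (hp2 : IsPMF p2)
    {F G : (Fin (M1 + 1) → Fin (K + 1) → X1) → (Fin (M2 + 1) → Fin (K + 1) → X2) → ℝ}
    (h : ∀ f1 f2, F f1 f2 ≤ G f1 f2) : cbE p1 p2 F ≤ cbE p1 p2 G :=
  Finset.sum_le_sum fun f1 _ => Finset.sum_le_sum fun f2 _ =>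
    mul_le_mul_of_nonneg_left (h f1 f2) (cbWeight_nonneg hp1 hp2 f1 f2)

lemma cbE_add
    (F G : (Fin (M1 + 1) → Fin (K + 1) → X1) → (Fin (M2 + 1) → Fin (K + 1) → X2) → ℝ) :
    cbE p1 p2 (fun f1 f2 => F f1 f2 + G f1 f2) = cbE p1 p2 F + cbE p1 p2 G := by
  simp only [cbE, mul_add, Finset.sum_add_distrib]

lemma cbE_mul_left (c : ℝ)
    (F : (Fin (M1 + 1) → Fin (K + 1) → X1) → (Fin (M2 + 1) → Fin (K + 1) → X2) → ℝ) :
    cbE p1 p2 (fun f1 f2 => c * F f1 f2) = c * cbE p1 p2 F := by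
  simp only [cbE, mul_left_comm _ c, Finset.mul_sum]

lemma cbE_sum {ι : Type*} [Fintype ι]
    (F : ι → (Fin (M1 + 1) → Fin (K + 1) → X1) → (Fin (M2 + 1) → Fin (K + 1) → X2) → ℝ) :
    cbE p1 p2 (fun f1 f2 => ∑ i, F i f1 f2) = ∑ i, cbE p1 p2 (F i) := by
  simp only [cbE, Finset.mul_sum]
  rw [Finset.sum_comm (s := (Finset.univ : Finset ι))]
  refine Finset.sum_congr rfl fun f1 _ => ?_
  rw [Finset.sum_comm (s := (Finset.univ : Finset ι))]

lemma cbE_one (hp1 : IsPMF p1) (hp2 : IsPMF p2) :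
    cbE p1 p2 (fun (_ : Fin (M1 + 1) → Fin (K + 1) → X1)
      (_ : Fin (M2 + 1) → Fin (K + 1) → X2) => 1) = 1 := by
  simp only [cbE, cbWeight, mul_one, ← Finset.mul_sum,
    sum_weight p1 hp1.2, sum_weight p2 hp2.2]

lemma cbE_resample1 (hp1 : IsPMF p1) (m : Fin (M1 + 1)) (k : Fin (K + 1))
    (F : (Fin (M1 + 1) → Fin (K + 1) → X1) → (Fin (M2 + 1) → Fin (K + 1) → X2) → ℝ) :
    cbE p1 p2 F = cbE p1 p2 fun f1 f2 => ∑ a, p1 a * F (setEntry f1 m k a) f2 := by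
  simp only [cbE, cbWeight]
  rw [Finset.sum_comm, Finset.sum_comm (s := (Finset.univ :
    Finset (Fin (M1 + 1) → Fin (K + 1) → X1)))]
  refine Finset.sum_congr rfl fun f2 _ => ?_
  simp only [mul_right_comm _ (∏ m2, ∏ k, p2 (f2 m2 k))]
  rw [← Finset.sum_mul, ← Finset.sum_mul, sum_resample p1 hp1.2 m k (fun f1 => F f1 f2)]

lemma cbE_resample2 (hp2 : IsPMF p2) (m : Fin (M2 + 1)) (k : Fin (K + 1))
    (F : (Fin (M1 + 1) → Fin (K + 1) → X1) → (Fin (M2 + 1) → Fin (K + 1) → X2) → ℝ) :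
    cbE p1 p2 F = cbE p1 p2 fun f1 f2 => ∑ b, p2 b * F f1 (setEntry f2 m k b) := by
  simp only [cbE, cbWeight]
  refine Finset.sum_congr rfl fun f1 _ => ?_
  simp only [mul_assoc]
  rw [← Finset.mul_sum, ← Finset.mul_sum, sum_resample p2 hp2.2 m k (fun f2 => F f1 f2)]

/-- Relabelling the messages does not change the law of the codebooks. -/
lemma cbE_perm (σ : Equiv.Perm (Fin (M1 + 1))) (τ : Equiv.Perm (Fin (M2 + 1)))
    (F : (Fin (M1 + 1) → Fin (K + 1) → X1) → (Fin (M2 + 1) → Fin (K + 1) → X2) → ℝ) :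
    cbE p1 p2 (fun f1 f2 => F (f1 ∘ σ) (f2 ∘ τ)) = cbE p1 p2 F := by
  simp only [cbE]
  rw [← Equiv.sum_comp (Equiv.arrowCongr σ.symm (Equiv.refl (Fin (K + 1) → X1)))
    (fun f1 => ∑ f2, cbWeight p1 p2 f1 f2 * F f1 f2)]
  refine Finset.sum_congr rfl fun f1 _ => ?_
  rw [← Equiv.sum_comp (Equiv.arrowCongr τ.symm (Equiv.refl (Fin (K + 1) → X2)))
    (fun f2 => cbWeight p1 p2
      (Equiv.arrowCongr σ.symm (Equiv.refl (Fin (K + 1) → X1)) f1) f2 * F _ f2)]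
  refine Finset.sum_congr rfl fun f2 _ => ?_
  have h1 : Equiv.arrowCongr σ.symm (Equiv.refl (Fin (K + 1) → X1)) f1 = f1 ∘ σ := rfl
  have h2 : Equiv.arrowCongr τ.symm (Equiv.refl (Fin (K + 1) → X2)) f2 = f2 ∘ τ := rfl
  rw [h1, h2]
  congr 1
  simp only [cbWeight, Function.comp]
  rw [Equiv.prod_comp σ (fun i => ∏ k, p1 (f1 i k)),
    Equiv.prod_comp τ (fun i => ∏ k, p2 (f2 i k))]

end Expectation

/-! ### Tail bounds for the information densities -/

/-- Markov's inequality after a change of measure: if `∑ p w = q > 0`, the `p`-probability that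
`log₂ (w / q)` reaches `c` is at most `2 ^ (-c)`. -/
lemma tail_bound {α : Type*} [Fintype α] (p w : α → ℝ) (hp : ∀ a, 0 ≤ p a) (hw : ∀ a, 0 < w a)
    (q c : ℝ) (hq : 0 < q) (hpq : ∑ a, p a * w a = q) :
    ∑ a, p a * (if c ≤ Real.logb 2 (w a / q) then (1 : ℝ) else 0) ≤ (2 : ℝ) ^ (-c) := by
  calc ∑ a, p a * (if c ≤ Real.logb 2 (w a / q) then (1 : ℝ) else 0)
      ≤ ∑ a, p a * ((2 : ℝ) ^ (-c) * (w a / q)) := by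
        refine Finset.sum_le_sum fun a _ => mul_le_mul_of_nonneg_left ?_ (hp a)
        have hwq : 0 < w a / q := div_pos (hw a) hq
        split_ifs with h
        · rw [Real.le_logb_iff_rpow_le one_lt_two hwq] at h
          calc (1 : ℝ) = (2 : ℝ) ^ (-c) * (2 : ℝ) ^ c := by
                rw [← Real.rpow_add two_pos]; simp
            _ ≤ _ := mul_le_mul_of_nonneg_left h (by positivity)
        · positivity
    _ = (2 : ℝ) ^ (-c) * ((∑ a, p a * w a) / q) := by
        rw [Finset.sum_div, Finset.mul_sum]
        exact Finset.sum_congr rfl fun a _ => by ring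
    _ = (2 : ℝ) ^ (-c) := by rw [hpq, div_self hq.ne', mul_one]

lemma IsPMF.avg_pos {α : Type*} [Fintype α] {p : α → ℝ} (hp : IsPMF p) (w : α → ℝ)
    (hw : ∀ a, 0 < w a) : 0 < ∑ a, p a * w a := by
  obtain ⟨a, -, ha⟩ : ∃ a ∈ Finset.univ, p a ≠ 0 :=
    Finset.exists_ne_zero_of_sum_ne_zero (by rw [hp.2]; exact one_ne_zero)
  exact Finset.sum_pos' (fun b _ => mul_nonneg (hp.1 b) (hw b).le)
    ⟨a, Finset.mem_univ _, mul_pos ((hp.1 a).lt_of_ne' ha) (hw a)⟩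

lemma tail12 {W : X1 → X2 → Y → ℝ} {p1 : X1 → ℝ} {p2 : X2 → ℝ}
    (hWpos : ∀ x1 x2 y, 0 < W x1 x2 y) (hp1 : IsPMF p1) (hp2 : IsPMF p2) (c : ℝ) (y : Y) :
    ∑ a, p1 a * ∑ b, p2 b * (if c ≤ iDens W p1 p2 a b y then (1 : ℝ) else 0)
      ≤ (2 : ℝ) ^ (-c) := by
  have hq : outDist W p1 p2 y = ∑ a, p1 a * ∑ b, p2 b * W a b y := by
    simp only [outDist, Finset.mul_sum, mul_assoc]
  have hpos : 0 < outDist W p1 p2 y := by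
    rw [hq]
    exact hp1.avg_pos _ fun a => hp2.avg_pos _ fun b => hWpos a b y
  have := tail_bound (fun x : X1 × X2 => p1 x.1 * p2 x.2) (fun x => W x.1 x.2 y)
    (fun x => mul_nonneg (hp1.1 _) (hp2.1 _)) (fun x => hWpos _ _ _) (outDist W p1 p2 y) c hpos
    (by rw [Fintype.sum_prod_type]; rfl)
  rw [Fintype.sum_prod_type] at this
  simp only [Finset.mul_sum, mul_assoc] at this ⊢
  exact this

lemma tail1 {W : X1 → X2 → Y → ℝ} {p1 : X1 → ℝ}
    (hWpos : ∀ x1 x2 y, 0 < W x1 x2 y) (hp1 : IsPMF p1) (c : ℝ) (b : X2) (y : Y) :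
    ∑ a, p1 a * (if c ≤ iDensC1 W p1 a b y then (1 : ℝ) else 0) ≤ (2 : ℝ) ^ (-c) :=
  tail_bound p1 (fun a => W a b y) hp1.1 (fun a => hWpos a b y) (condOut2 W p1 b y) c
    (hp1.avg_pos _ fun a => hWpos a b y) rfl

lemma tail2 {W : X1 → X2 → Y → ℝ} {p2 : X2 → ℝ}
    (hWpos : ∀ x1 x2 y, 0 < W x1 x2 y) (hp2 : IsPMF p2) (c : ℝ) (a : X1) (y : Y) :
    ∑ b, p2 b * (if c ≤ iDensC2 W p2 a b y then (1 : ℝ) else 0) ≤ (2 : ℝ) ^ (-c) :=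
  tail_bound p2 (fun b => W a b y) hp2.1 (fun b => hWpos a b y) (condOut1 W p2 a y) c
    (hp2.avg_pos _ fun b => hWpos a b y) rfl

/-! ### Independent competing codewords -/

section Fresh

variable {M1 M2 K : ℕ} {W : X1 → X2 → Y → ℝ} {p1 : X1 → ℝ} {p2 : X2 → ℝ}

/-- If the nonnegative weight `G` on outputs ignores the entries `f1 m k` and `f2 m' k`, then
requiring this codeword pair to pass the joint threshold costs a factor `2 ^ (-c)`. -/
lemma fresh12 (hWpos : ∀ x1 x2 y, 0 < W x1 x2 y) (hp1 : IsPMF p1) (hp2 : IsPMF p2) (c : ℝ)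
    (m : Fin (M1 + 1)) (m' : Fin (M2 + 1)) (k : Fin (K + 1))
    (G : (Fin (M1 + 1) → Fin (K + 1) → X1) → (Fin (M2 + 1) → Fin (K + 1) → X2) → Y → ℝ)
    (hG : ∀ f1 f2 y, 0 ≤ G f1 f2 y)
    (hG1 : ∀ f1 f2 y a, G (setEntry f1 m k a) f2 y = G f1 f2 y)
    (hG2 : ∀ f1 f2 y b, G f1 (setEntry f2 m' k b) y = G f1 f2 y) :
    cbE p1 p2 (fun f1 f2 => ∑ y, G f1 f2 y *
        (if c ≤ iDens W p1 p2 (f1 m k) (f2 m' k) y then (1 : ℝ) else 0))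
      ≤ (2 : ℝ) ^ (-c) * cbE p1 p2 (fun f1 f2 => ∑ y, G f1 f2 y) := by
  rw [cbE_resample2 hp2 m' k, cbE_resample1 hp1 m k, ← cbE_mul_left]
  refine cbE_mono hp1 hp2 fun f1 f2 => ?_
  simp only [hG1, hG2, setEntry_same]
  calc _ = ∑ y, G f1 f2 y *
        ∑ a, p1 a * ∑ b, p2 b * (if c ≤ iDens W p1 p2 a b y then (1 : ℝ) else 0) := by
        simp only [Finset.mul_sum]
        rw [Finset.sum_comm' (t' := Finset.univ) (s' := fun _ => Finset.univ) (by simp)]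
        rw [Finset.sum_comm (s := (Finset.univ : Finset Y))]
        rw [Finset.sum_comm]
        refine Finset.sum_congr rfl fun a _ => ?_
        rw [Finset.sum_comm]
        refine Finset.sum_congr rfl fun y _ => Finset.sum_congr rfl fun b _ => ?_
        ring
    _ ≤ _ := by
        rw [Finset.mul_sum]
        refine Finset.sum_le_sum fun y _ => ?_
        rw [mul_comm]
        exact mul_le_mul_of_nonneg_right (tail12 hWpos hp1 hp2 c y) (hG _ _ _)

/-- Conditional version of `fresh12`: only `f1 m k` has to be ignored by `G`. -/
lemma fresh1 (hWpos : ∀ x1 x2 y, 0 < W x1 x2 y) (hp1 : IsPMF p1) (hp2 : IsPMF p2) (c : ℝ)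
    (m : Fin (M1 + 1)) (m' : Fin (M2 + 1)) (k : Fin (K + 1))
    (G : (Fin (M1 + 1) → Fin (K + 1) → X1) → (Fin (M2 + 1) → Fin (K + 1) → X2) → Y → ℝ)
    (hG : ∀ f1 f2 y, 0 ≤ G f1 f2 y)
    (hG1 : ∀ f1 f2 y a, G (setEntry f1 m k a) f2 y = G f1 f2 y) :
    cbE p1 p2 (fun f1 f2 => ∑ y, G f1 f2 y *
        (if c ≤ iDensC1 W p1 (f1 m k) (f2 m' k) y then (1 : ℝ) else 0))
      ≤ (2 : ℝ) ^ (-c) * cbE p1 p2 (fun f1 f2 => ∑ y, G f1 f2 y) := by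
  rw [cbE_resample1 hp1 m k, ← cbE_mul_left]
  refine cbE_mono hp1 hp2 fun f1 f2 => ?_
  simp only [hG1, setEntry_same]
  simp only [Finset.mul_sum, mul_left_comm (p1 _)]
  rw [Finset.sum_comm]
  refine Finset.sum_le_sum fun y _ => ?_
  rw [← Finset.mul_sum, mul_comm]
  exact mul_le_mul_of_nonneg_right (tail1 hWpos hp1 c _ y) (hG _ _ _)

/-- Conditional version of `fresh12`: only `f2 m' k` has to be ignored by `G`. -/
lemma fresh2 (hWpos : ∀ x1 x2 y, 0 < W x1 x2 y) (hp1 : IsPMF p1) (hp2 : IsPMF p2) (c : ℝ)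
    (m : Fin (M1 + 1)) (m' : Fin (M2 + 1)) (k : Fin (K + 1))
    (G : (Fin (M1 + 1) → Fin (K + 1) → X1) → (Fin (M2 + 1) → Fin (K + 1) → X2) → Y → ℝ)
    (hG : ∀ f1 f2 y, 0 ≤ G f1 f2 y)
    (hG2 : ∀ f1 f2 y b, G f1 (setEntry f2 m' k b) y = G f1 f2 y) :
    cbE p1 p2 (fun f1 f2 => ∑ y, G f1 f2 y *
        (if c ≤ iDensC2 W p2 (f1 m k) (f2 m' k) y then (1 : ℝ) else 0))
      ≤ (2 : ℝ) ^ (-c) * cbE p1 p2 (fun f1 f2 => ∑ y, G f1 f2 y) := by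
  rw [cbE_resample2 hp2 m' k, ← cbE_mul_left]
  refine cbE_mono hp1 hp2 fun f1 f2 => ?_
  simp only [hG2, setEntry_same]
  simp only [Finset.mul_sum, mul_left_comm (p2 _)]
  rw [Finset.sum_comm]
  refine Finset.sum_le_sum fun y _ => ?_
  rw [← Finset.mul_sum, mul_comm]
  exact mul_le_mul_of_nonneg_right (tail2 hWpos hp2 c _ y) (hG _ _ _)

end Fresh

/-! ### The facilitator with one index left out -/

/-- The smallest maximizer of `v` over the indices other than `k0`; the value is `k0` itself when
there is no other index. -/
def argmaxExcept {K : ℕ} (v : Fin (K + 1) → ℝ) (k0 : Fin (K + 1)) : Fin (K + 1) :=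
  if h : (Finset.univ.filter fun k => k ≠ k0 ∧ ∀ k' ≠ k0, v k' ≤ v k).Nonempty
  then (Finset.univ.filter fun k => k ≠ k0 ∧ ∀ k' ≠ k0, v k' ≤ v k).min' h else k0

lemma argmaxExcept_congr {K : ℕ} {v v' : Fin (K + 1) → ℝ} {k0 : Fin (K + 1)}
    (h : ∀ k ≠ k0, v k = v' k) : argmaxExcept v k0 = argmaxExcept v' k0 := by
  have : (Finset.univ.filter fun k => k ≠ k0 ∧ ∀ k' ≠ k0, v k' ≤ v k)
      = Finset.univ.filter fun k => k ≠ k0 ∧ ∀ k' ≠ k0, v' k' ≤ v' k := by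
    ext k
    simp only [Finset.mem_filter, Finset.mem_univ, true_and]
    refine and_congr_right fun hk => forall₂_congr fun k' hk' => ?_
    rw [h k hk, h k' hk']
  unfold argmaxExcept
  simp only [this]

lemma argmaxExcept_eq {K : ℕ} {v : Fin (K + 1) → ℝ} {k0 : Fin (K + 1)}
    (h : argmaxTie v ≠ k0) : argmaxExcept v k0 = argmaxTie v := by
  have hmax : ∀ k', v k' ≤ v (argmaxTie v) :=
    (Finset.mem_filter.mp (Finset.min'_mem (Finset.univ.filter fun k => ∀ k', v k' ≤ v k) _)).2
  have hmem : argmaxTie v ∈ Finset.univ.filter fun k => k ≠ k0 ∧ ∀ k' ≠ k0, v k' ≤ v k := by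
    simp only [Finset.mem_filter, Finset.mem_univ, true_and]
    exact ⟨h, fun k' _ => hmax k'⟩
  rw [argmaxExcept, dif_pos ⟨_, hmem⟩]
  apply le_antisymm (Finset.min'_le _ _ hmem)
  refine Finset.min'_le _ _ ?_
  have hj := Finset.min'_mem _ ⟨_, hmem⟩
  simp only [Finset.mem_filter, Finset.mem_univ, true_and] at hj ⊢
  exact fun k' => (hmax k').trans (hj.2 _ h)

section Errors

variable {M1 M2 K : ℕ} {W : X1 → X2 → Y → ℝ} {p1 : X1 → ℝ} {p2 : X2 → ℝ}

/-- Output law at `y` when the facilitator serves the pair `(m1, m2)` without using index `k0`;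
it is `0` when no other index exists. -/
def outExcept (W : X1 → X2 → Y → ℝ) (s : X1 → X2 → ℝ) {M1 M2 K : ℕ}
    (m1 : Fin (M1 + 1)) (m2 : Fin (M2 + 1)) (k0 : Fin (K + 1))
    (f1 : Fin (M1 + 1) → Fin (K + 1) → X1) (f2 : Fin (M2 + 1) → Fin (K + 1) → X2) (y : Y) : ℝ :=
  if argmaxExcept (fun k => s (f1 m1 k) (f2 m2 k)) k0 = k0 then 0
  else W (f1 m1 (argmaxExcept (fun k => s (f1 m1 k) (f2 m2 k)) k0))
    (f2 m2 (argmaxExcept (fun k => s (f1 m1 k) (f2 m2 k)) k0)) y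

lemma outExcept_congr (s : X1 → X2 → ℝ) (m1 : Fin (M1 + 1)) (m2 : Fin (M2 + 1))
    (k0 : Fin (K + 1)) {f1 f1' : Fin (M1 + 1) → Fin (K + 1) → X1}
    {f2 f2' : Fin (M2 + 1) → Fin (K + 1) → X2} (h1 : ∀ k ≠ k0, f1 m1 k = f1' m1 k)
    (h2 : ∀ k ≠ k0, f2 m2 k = f2' m2 k) (y : Y) :
    outExcept W s m1 m2 k0 f1 f2 y = outExcept W s m1 m2 k0 f1' f2' y := by
  unfold outExcept
  rw [argmaxExcept_congr (v' := fun k => s (f1' m1 k) (f2' m2 k))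
    (fun k hk => by simp only [h1 k hk, h2 k hk])]
  split_ifs with h
  · rfl
  · rw [h1 _ h, h2 _ h]

lemma outExcept_nonneg (hWpos : ∀ x1 x2 y, 0 < W x1 x2 y) (s : X1 → X2 → ℝ)
    (m1 : Fin (M1 + 1)) (m2 : Fin (M2 + 1)) (k0 : Fin (K + 1))
    (f1 : Fin (M1 + 1) → Fin (K + 1) → X1) (f2 : Fin (M2 + 1) → Fin (K + 1) → X2) (y : Y) :
    0 ≤ outExcept W s m1 m2 k0 f1 f2 y := by
  unfold outExcept
  split_ifs
  · exact le_rfl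
  · exact (hWpos _ _ _).le

lemma outExcept_of_ne (s : X1 → X2 → ℝ) {m1 : Fin (M1 + 1)} {m2 : Fin (M2 + 1)}
    {k0 : Fin (K + 1)} {f1 : Fin (M1 + 1) → Fin (K + 1) → X1}
    {f2 : Fin (M2 + 1) → Fin (K + 1) → X2} (h : facil s f1 f2 m1 m2 ≠ k0) (y : Y) :
    outExcept W s m1 m2 k0 f1 f2 y = W (enc1 s f1 f2 m1 m2) (enc2 s f1 f2 m1 m2) y := by
  unfold outExcept
  rw [argmaxExcept_eq h]
  exact if_neg h

lemma sum_outExcept_le (hW1 : ∀ x1 x2, ∑ y, W x1 x2 y = 1) (s : X1 → X2 → ℝ)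
    (m1 : Fin (M1 + 1)) (m2 : Fin (M2 + 1)) (k0 : Fin (K + 1))
    (f1 : Fin (M1 + 1) → Fin (K + 1) → X1) (f2 : Fin (M2 + 1) → Fin (K + 1) → X2) :
    ∑ y, outExcept W s m1 m2 k0 f1 f2 y ≤ 1 := by
  unfold outExcept
  split_ifs
  · simp
  · rw [hW1]

/-! ### Confusion probabilities -/

/-- Total weight of the joint-threshold events when index `k` of a competing message pair is
compared with an output produced without index `k`: at most `2 ^ (-c)` for each of the `K + 1`
indices.  The competing pair may share a message with the transmitted one. -/
lemma except_bound (hWpos : ∀ x1 x2 y, 0 < W x1 x2 y) (hW1 : ∀ x1 x2, ∑ y, W x1 x2 y = 1)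
    (hp1 : IsPMF p1) (hp2 : IsPMF p2) (s : X1 → X2 → ℝ) (c : ℝ)
    (m1 m1' : Fin (M1 + 1)) (m2 m2' : Fin (M2 + 1)) :
    cbE p1 p2 (fun f1 f2 => ∑ k : Fin (K + 1), ∑ y, outExcept W s m1 m2 k f1 f2 y *
        (if c ≤ iDens W p1 p2 (f1 m1' k) (f2 m2' k) y then (1 : ℝ) else 0))
      ≤ ((K : ℝ) + 1) * (2 : ℝ) ^ (-c) := by
  rw [cbE_sum]
  calc _ ≤ ∑ _k : Fin (K + 1), (2 : ℝ) ^ (-c) := by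
        refine Finset.sum_le_sum fun k _ => ?_
        refine (fresh12 hWpos hp1 hp2 c m1' m2' k (outExcept W s m1 m2 k)
          (fun f1 f2 y => outExcept_nonneg hWpos s m1 m2 k f1 f2 y)
          (fun f1 f2 y a => outExcept_congr s m1 m2 k
            (fun j hj => setEntry_col f1 _ _ hj a) (fun _ _ => rfl) y)
          (fun f1 f2 y b => outExcept_congr s m1 m2 k (fun _ _ => rfl)
            (fun j hj => setEntry_col f2 _ _ hj b) y)).trans ?_
        refine mul_le_of_le_one_right (by positivity) ?_
        exact (cbE_mono hp1 hp2 (sum_outExcept_le hW1 s m1 m2 k)).trans (cbE_one hp1 hp2).le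
    _ = _ := by simp

lemma facil_congr (s : X1 → X2 → ℝ) {m1 : Fin (M1 + 1)} {m2 : Fin (M2 + 1)}
    {f1 f1' : Fin (M1 + 1) → Fin (K + 1) → X1} {f2 f2' : Fin (M2 + 1) → Fin (K + 1) → X2}
    (h1 : f1 m1 = f1' m1) (h2 : f2 m2 = f2' m2) :
    facil s f1 f2 m1 m2 = facil s f1' f2' m1 m2 := by
  simp only [facil, h1, h2]

/-- The transmitted output law at `y`, restricted to the event that the facilitator selects
index `k`. -/
def outAt (W : X1 → X2 → Y → ℝ) (s : X1 → X2 → ℝ) {M1 M2 K : ℕ}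
    (m1 : Fin (M1 + 1)) (m2 : Fin (M2 + 1)) (k : Fin (K + 1))
    (f1 : Fin (M1 + 1) → Fin (K + 1) → X1) (f2 : Fin (M2 + 1) → Fin (K + 1) → X2) (y : Y) : ℝ :=
  if facil s f1 f2 m1 m2 = k then W (f1 m1 k) (f2 m2 k) y else 0

lemma outAt_congr (s : X1 → X2 → ℝ) {m1 : Fin (M1 + 1)} {m2 : Fin (M2 + 1)} (k : Fin (K + 1))
    {f1 f1' : Fin (M1 + 1) → Fin (K + 1) → X1} {f2 f2' : Fin (M2 + 1) → Fin (K + 1) → X2}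
    (h1 : f1 m1 = f1' m1) (h2 : f2 m2 = f2' m2) (y : Y) :
    outAt W s m1 m2 k f1 f2 y = outAt W s m1 m2 k f1' f2' y := by
  simp only [outAt, facil_congr s h1 h2, h1, h2]

lemma outAt_nonneg (hWpos : ∀ x1 x2 y, 0 < W x1 x2 y) (s : X1 → X2 → ℝ)
    (m1 : Fin (M1 + 1)) (m2 : Fin (M2 + 1)) (k : Fin (K + 1))
    (f1 : Fin (M1 + 1) → Fin (K + 1) → X1) (f2 : Fin (M2 + 1) → Fin (K + 1) → X2) (y : Y) :
    0 ≤ outAt W s m1 m2 k f1 f2 y := by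
  unfold outAt
  split_ifs
  · exact (hWpos _ _ _).le
  · exact le_rfl

lemma sum_cbE_outAt (hW1 : ∀ x1 x2, ∑ y, W x1 x2 y = 1)
    (hp1 : IsPMF p1) (hp2 : IsPMF p2) (s : X1 → X2 → ℝ)
    (m1 : Fin (M1 + 1)) (m2 : Fin (M2 + 1)) :
    ∑ k : Fin (K + 1), cbE p1 p2 (fun f1 f2 => ∑ y, outAt W s m1 m2 k f1 f2 y) = 1 := by
  rw [← cbE_sum, ← cbE_one (M1 := M1) (M2 := M2) (K := K) hp1 hp2]
  congr 1
  funext f1 f2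
  rw [Finset.sum_comm]
  simp only [outAt, Finset.sum_ite_eq, Finset.mem_univ, if_true, hW1]

/-- A term of the union bound: the output generated by `(m1, m2)` passes the threshold test for
`(m1', m2')`. -/
def confuse (W : X1 → X2 → Y → ℝ) (p1 : X1 → ℝ) (p2 : X2 → ℝ) (s : X1 → X2 → ℝ)
    (c12 c1 c2 : ℝ) {M1 M2 K : ℕ} (m1 m1' : Fin (M1 + 1)) (m2 m2' : Fin (M2 + 1))
    (f1 : Fin (M1 + 1) → Fin (K + 1) → X1) (f2 : Fin (M2 + 1) → Fin (K + 1) → X2) : ℝ :=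
  ∑ y, W (enc1 s f1 f2 m1 m2) (enc2 s f1 f2 m1 m2) y *
    (if goodPair W p1 p2 c12 c1 c2 (enc1 s f1 f2 m1' m2') (enc2 s f1 f2 m1' m2') y
      then (1 : ℝ) else 0)

/-- Both messages wrong: every competing codeword pair is independent of the output. -/
lemma confuse_both (hWpos : ∀ x1 x2 y, 0 < W x1 x2 y) (hW1 : ∀ x1 x2, ∑ y, W x1 x2 y = 1)
    (hp1 : IsPMF p1) (hp2 : IsPMF p2) (s : X1 → X2 → ℝ) (c12 c1 c2 : ℝ)
    {m1 m1' : Fin (M1 + 1)} {m2 m2' : Fin (M2 + 1)} (h1 : m1' ≠ m1) (h2 : m2' ≠ m2) :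
    cbE p1 p2 (confuse (K := K) W p1 p2 s c12 c1 c2 m1 m1' m2 m2')
      ≤ ((K : ℝ) + 1) * (2 : ℝ) ^ (-c12) := by
  calc _ ≤ cbE p1 p2 (fun f1 f2 => ∑ k : Fin (K + 1), ∑ y,
          W (enc1 s f1 f2 m1 m2) (enc2 s f1 f2 m1 m2) y *
          (if c12 ≤ iDens W p1 p2 (f1 m1' k) (f2 m2' k) y then (1 : ℝ) else 0)) := by
        refine cbE_mono hp1 hp2 fun f1 f2 => ?_
        refine le_trans (Finset.sum_le_sum fun y _ => ?_) (Finset.single_le_sum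
          (fun k _ => Finset.sum_nonneg fun y _ => mul_nonneg (hWpos _ _ _).le
            (by split_ifs <;> norm_num)) (Finset.mem_univ (facil s f1 f2 m1' m2')))
        refine mul_le_mul_of_nonneg_left ?_ (hWpos _ _ _).le
        split_ifs with ha hb hb
        · exact le_rfl
        · exact absurd ha.1 hb
        · exact zero_le_one
        · exact le_rfl
    _ ≤ ∑ _k : Fin (K + 1), (2 : ℝ) ^ (-c12) := by
        rw [cbE_sum]
        refine Finset.sum_le_sum fun k _ => ?_
        refine (fresh12 hWpos hp1 hp2 c12 m1' m2' k
          (fun f1 f2 y => W (enc1 s f1 f2 m1 m2) (enc2 s f1 f2 m1 m2) y)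
          (fun f1 f2 y => (hWpos _ _ _).le)
          (fun f1 f2 y a => ?_) (fun f1 f2 y b => ?_)).trans ?_
        · have h := setEntry_row f1 h1.symm k a
          simp only [enc1, enc2, facil_congr s (f2 := f2) (f2' := f2) (m2 := m2) h rfl, h]
        · have h := setEntry_row f2 h2.symm k b
          simp only [enc1, enc2, facil_congr s (f1 := f1) (f1' := f1) (m1 := m1) rfl h, h]
        · simp only [hW1, cbE_one hp1 hp2, mul_one, le_refl]
    _ = _ := by simp

/-- The dichotomy for the index `k'` used by a competing pair: either it is the transmitted
index, and then `R k'` is any event implied by the threshold test, or the output is unchanged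
when index `k'` is left out. -/
lemma confuse_le (hWpos : ∀ x1 x2 y, 0 < W x1 x2 y) (s : X1 → X2 → ℝ) (c12 c1 c2 : ℝ)
    (m1 m1' : Fin (M1 + 1)) (m2 m2' : Fin (M2 + 1))
    (f1 : Fin (M1 + 1) → Fin (K + 1) → X1) (f2 : Fin (M2 + 1) → Fin (K + 1) → X2)
    (R : Fin (K + 1) → Y → Prop)
    (hR : ∀ k y, goodPair W p1 p2 c12 c1 c2 (f1 m1' k) (f2 m2' k) y → R k y) :
    confuse W p1 p2 s c12 c1 c2 m1 m1' m2 m2' f1 f2 ≤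
      (∑ k, ∑ y, outAt W s m1 m2 k f1 f2 y * (if R k y then (1 : ℝ) else 0)) +
      ∑ k, ∑ y, outExcept W s m1 m2 k f1 f2 y *
        (if c12 ≤ iDens W p1 p2 (f1 m1' k) (f2 m2' k) y then (1 : ℝ) else 0) := by
  have n1 : ∀ k, 0 ≤ ∑ y, outAt W s m1 m2 k f1 f2 y * (if R k y then (1 : ℝ) else 0) :=
    fun k => Finset.sum_nonneg fun y _ =>
      mul_nonneg (outAt_nonneg hWpos s m1 m2 k f1 f2 y) (by split_ifs <;> norm_num)
  have n2 : ∀ k, 0 ≤ ∑ y, outExcept W s m1 m2 k f1 f2 y *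
        (if c12 ≤ iDens W p1 p2 (f1 m1' k) (f2 m2' k) y then (1 : ℝ) else 0) :=
    fun k => Finset.sum_nonneg fun y _ =>
      mul_nonneg (outExcept_nonneg hWpos s m1 m2 k f1 f2 y) (by split_ifs <;> norm_num)
  set k' := facil s f1 f2 m1' m2' with hk'
  by_cases h : facil s f1 f2 m1 m2 = k'
  · refine le_add_of_le_of_nonneg ?_ (Finset.sum_nonneg fun k _ => n2 k)
    refine le_trans (Finset.sum_le_sum fun y _ => ?_)
      (Finset.single_le_sum (fun k _ => n1 k) (Finset.mem_univ k'))
    have : outAt W s m1 m2 k' f1 f2 y = W (enc1 s f1 f2 m1 m2) (enc2 s f1 f2 m1 m2) y := by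
      simp only [outAt, enc1, enc2, h, if_true]
    rw [this]
    refine mul_le_mul_of_nonneg_left ?_ (hWpos _ _ _).le
    split_ifs with ha hb hb
    · exact le_rfl
    · exact absurd (hR _ _ ha) hb
    · exact zero_le_one
    · exact le_rfl
  · refine le_add_of_nonneg_of_le (Finset.sum_nonneg fun k _ => n1 k) ?_
    refine le_trans (Finset.sum_le_sum fun y _ => ?_)
      (Finset.single_le_sum (fun k _ => n2 k) (Finset.mem_univ k'))
    rw [outExcept_of_ne s h]
    refine mul_le_mul_of_nonneg_left ?_ (hWpos _ _ _).le
    split_ifs with ha hb hb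
    · exact le_rfl
    · exact absurd ha.1 hb
    · exact zero_le_one
    · exact le_rfl

/-- Only the first message wrong. -/
lemma confuse_first (hWpos : ∀ x1 x2 y, 0 < W x1 x2 y) (hW1 : ∀ x1 x2, ∑ y, W x1 x2 y = 1)
    (hp1 : IsPMF p1) (hp2 : IsPMF p2) (s : X1 → X2 → ℝ) (c12 c1 c2 : ℝ)
    {m1 m1' : Fin (M1 + 1)} (m2 : Fin (M2 + 1)) (h1 : m1' ≠ m1) :
    cbE p1 p2 (confuse (K := K) W p1 p2 s c12 c1 c2 m1 m1' m2 m2)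
      ≤ ((K : ℝ) + 1) * (2 : ℝ) ^ (-c12) + (2 : ℝ) ^ (-c1) := by
  refine (cbE_mono hp1 hp2 fun f1 f2 => confuse_le hWpos s c12 c1 c2 m1 m1' m2 m2 f1 f2
    (fun k y => c1 ≤ iDensC1 W p1 (f1 m1' k) (f2 m2 k) y) (fun k y h => h.2.1)).trans ?_
  rw [cbE_add, add_comm]
  refine add_le_add (except_bound hWpos hW1 hp1 hp2 s c12 m1 m1' m2 m2) ?_
  rw [cbE_sum]
  refine (Finset.sum_le_sum fun k _ => fresh1 hWpos hp1 hp2 c1 m1' m2 k (outAt W s m1 m2 k)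
    (outAt_nonneg hWpos s m1 m2 k)
    (fun f1 f2 y a => outAt_congr s k (setEntry_row f1 h1.symm k a) rfl y)).trans ?_
  rw [← Finset.mul_sum, sum_cbE_outAt hW1 hp1 hp2, mul_one]

/-- Only the second message wrong. -/
lemma confuse_second (hWpos : ∀ x1 x2 y, 0 < W x1 x2 y) (hW1 : ∀ x1 x2, ∑ y, W x1 x2 y = 1)
    (hp1 : IsPMF p1) (hp2 : IsPMF p2) (s : X1 → X2 → ℝ) (c12 c1 c2 : ℝ)
    (m1 : Fin (M1 + 1)) {m2 m2' : Fin (M2 + 1)} (h2 : m2' ≠ m2) :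
    cbE p1 p2 (confuse (K := K) W p1 p2 s c12 c1 c2 m1 m1 m2 m2')
      ≤ ((K : ℝ) + 1) * (2 : ℝ) ^ (-c12) + (2 : ℝ) ^ (-c2) := by
  refine (cbE_mono hp1 hp2 fun f1 f2 => confuse_le hWpos s c12 c1 c2 m1 m1 m2 m2' f1 f2
    (fun k y => c2 ≤ iDensC2 W p2 (f1 m1 k) (f2 m2' k) y) (fun k y h => h.2.2)).trans ?_
  rw [cbE_add, add_comm]
  refine add_le_add (except_bound hWpos hW1 hp1 hp2 s c12 m1 m1 m2 m2') ?_
  rw [cbE_sum]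
  refine (Finset.sum_le_sum fun k _ => fresh2 hWpos hp1 hp2 c2 m1 m2' k (outAt W s m1 m2 k)
    (outAt_nonneg hWpos s m1 m2 k)
    (fun f1 f2 y b => outAt_congr s k rfl (setEntry_row f2 h2.symm k b) y)).trans ?_
  rw [← Finset.mul_sum, sum_cbE_outAt hW1 hp1 hp2, mul_one]

/-! ### Averaging over messages -/

/-- By symmetry the selected codeword pair has law `qTilde` for every message pair. -/
lemma cbE_selected (s : X1 → X2 → ℝ) (m1 : Fin (M1 + 1)) (m2 : Fin (M2 + 1))
    (φ : X1 → X2 → ℝ) :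
    cbE (K := K) p1 p2 (fun f1 f2 => φ (enc1 s f1 f2 m1 m2) (enc2 s f1 f2 m1 m2))
      = ∑ x1, ∑ x2, qTilde p1 p2 s M1 M2 K x1 x2 * φ x1 x2 := by
  have hsymm : cbE (K := K) p1 p2
      (fun f1 f2 => φ (enc1 s f1 f2 m1 m2) (enc2 s f1 f2 m1 m2))
      = cbE (K := K) p1 p2
        (fun (f1 : Fin (M1 + 1) → _) (f2 : Fin (M2 + 1) → _) =>
          φ (enc1 s f1 f2 0 0) (enc2 s f1 f2 0 0)) := by
    rw [← cbE_perm (Equiv.swap 0 m1) (Equiv.swap 0 m2) (fun f1 f2 =>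
      φ (enc1 s f1 f2 0 0) (enc2 s f1 f2 0 0))]
    simp [enc1, enc2, facil]
  have hind : ∀ f1 : Fin (M1 + 1) → Fin (K + 1) → X1, ∀ f2 : Fin (M2 + 1) → Fin (K + 1) → X2,
      φ (enc1 s f1 f2 0 0) (enc2 s f1 f2 0 0) = ∑ x1, ∑ x2, φ x1 x2 *
        (if enc1 s f1 f2 0 0 = x1 ∧ enc2 s f1 f2 0 0 = x2 then (1 : ℝ) else 0) := by
    intro f1 f2
    simp [ite_and]
  rw [hsymm]
  simp only [hind]
  rw [cbE_sum]
  refine Finset.sum_congr rfl fun x1 _ => ?_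
  rw [cbE_sum]
  refine Finset.sum_congr rfl fun x2 _ => ?_
  rw [cbE_mul_left, mul_comm]
  simp only [cbE, qTilde]

/-- Expected error probability of one fixed message pair. -/
lemma message_error_bound (hWpos : ∀ x1 x2 y, 0 < W x1 x2 y)
    (hW1 : ∀ x1 x2, ∑ y, W x1 x2 y = 1)
    (hp1 : IsPMF p1) (hp2 : IsPMF p2) (s : X1 → X2 → ℝ) (c12 c1 c2 : ℝ)
    (m1 : Fin (M1 + 1)) (m2 : Fin (M2 + 1)) :
    cbE (K := K) p1 p2 (fun f1 f2 => ∑ y,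
      W (enc1 s f1 f2 m1 m2) (enc2 s f1 f2 m1 m2) y *
      (if goodPair W p1 p2 c12 c1 c2 (enc1 s f1 f2 m1 m2) (enc2 s f1 f2 m1 m2) y ∧
          (∀ m1' m2', goodPair W p1 p2 c12 c1 c2
              (enc1 s f1 f2 m1' m2') (enc2 s f1 f2 m1' m2') y → (m1', m2') = (m1, m2))
        then (0 : ℝ) else 1)) ≤
      (∑ x1, ∑ x2, ∑ y, qTilde p1 p2 s M1 M2 K x1 x2 * W x1 x2 y *
          (if ¬ goodPair W p1 p2 c12 c1 c2 x1 x2 y then (1 : ℝ) else 0)) +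
        ((M1 : ℝ) + 1) * ((M2 : ℝ) + 1) * ((K : ℝ) + 1) * (2 : ℝ) ^ (-c12) +
        ((M1 : ℝ) + 1) * (2 : ℝ) ^ (-c1) +
        ((M2 : ℝ) + 1) * (2 : ℝ) ^ (-c2) := by
  have hmain := cbE_selected (K := K) (p1 := p1) (p2 := p2) s m1 m2 (fun x1 x2 =>
    ∑ y, W x1 x2 y * (if ¬ goodPair W p1 p2 c12 c1 c2 x1 x2 y then (1 : ℝ) else 0))
  simp only [Finset.mul_sum, ← mul_assoc] at hmain
  rw [← hmain]
  have hpt : ∀ (f1 : Fin (M1 + 1) → Fin (K + 1) → X1) (f2 : Fin (M2 + 1) → Fin (K + 1) → X2),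
      (∑ y, W (enc1 s f1 f2 m1 m2) (enc2 s f1 f2 m1 m2) y *
      (if goodPair W p1 p2 c12 c1 c2 (enc1 s f1 f2 m1 m2) (enc2 s f1 f2 m1 m2) y ∧
          (∀ m1' m2', goodPair W p1 p2 c12 c1 c2
              (enc1 s f1 f2 m1' m2') (enc2 s f1 f2 m1' m2') y → (m1', m2') = (m1, m2))
        then (0 : ℝ) else 1)) ≤
      (∑ y, W (enc1 s f1 f2 m1 m2) (enc2 s f1 f2 m1 m2) y *
        (if ¬ goodPair W p1 p2 c12 c1 c2 (enc1 s f1 f2 m1 m2) (enc2 s f1 f2 m1 m2) y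
          then (1 : ℝ) else 0)) +
      ∑ m1', ∑ m2', (if (m1', m2') = (m1, m2) then (0 : ℝ) else 1) *
        confuse W p1 p2 s c12 c1 c2 m1 m1' m2 m2' f1 f2 := by
    intro f1 f2
    have hswap : (∑ m1', ∑ m2', (if (m1', m2') = (m1, m2) then (0 : ℝ) else 1) *
        confuse W p1 p2 s c12 c1 c2 m1 m1' m2 m2' f1 f2) =
        ∑ y, ∑ m' : Fin (M1 + 1) × Fin (M2 + 1), (if m' = (m1, m2) then (0 : ℝ) else 1) *
          (W (enc1 s f1 f2 m1 m2) (enc2 s f1 f2 m1 m2) y *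
          (if goodPair W p1 p2 c12 c1 c2 (enc1 s f1 f2 m'.1 m'.2) (enc2 s f1 f2 m'.1 m'.2) y
            then (1 : ℝ) else 0)) := by
      rw [Finset.sum_comm (s := (Finset.univ : Finset Y)), Fintype.sum_prod_type]
      simp only [confuse, Finset.mul_sum]
    rw [hswap, ← Finset.sum_add_distrib]
    refine Finset.sum_le_sum fun y _ => ?_
    have hWn := (hWpos (enc1 s f1 f2 m1 m2) (enc2 s f1 f2 m1 m2) y).le
    have hnn : ∀ m' : Fin (M1 + 1) × Fin (M2 + 1), 0 ≤ (if m' = (m1, m2) then (0 : ℝ) else 1) *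
          (W (enc1 s f1 f2 m1 m2) (enc2 s f1 f2 m1 m2) y *
          (if goodPair W p1 p2 c12 c1 c2 (enc1 s f1 f2 m'.1 m'.2) (enc2 s f1 f2 m'.1 m'.2) y
            then (1 : ℝ) else 0)) := fun m' =>
      mul_nonneg (by split_ifs <;> norm_num) (mul_nonneg hWn (by split_ifs <;> norm_num))
    by_cases hg : goodPair W p1 p2 c12 c1 c2 (enc1 s f1 f2 m1 m2) (enc2 s f1 f2 m1 m2) y
    · by_cases hu : ∀ m1' m2', goodPair W p1 p2 c12 c1 c2
              (enc1 s f1 f2 m1' m2') (enc2 s f1 f2 m1' m2') y → (m1', m2') = (m1, m2)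
      · rw [if_pos ⟨hg, hu⟩, if_neg (not_not.mpr hg), mul_zero, zero_add]
        exact Finset.sum_nonneg fun m' _ => hnn m'
      · rw [if_neg (fun h => hu h.2), if_neg (not_not.mpr hg), mul_zero, zero_add]
        push Not at hu
        obtain ⟨m1', m2', hgood, hne⟩ := hu
        refine le_trans ?_ (Finset.single_le_sum (fun m' _ => hnn m')
          (Finset.mem_univ (m1', m2')))
        rw [if_neg hne, if_pos hgood, one_mul]
    · rw [if_neg (fun h => hg h.1), if_pos hg]
      exact le_add_of_nonneg_right (Finset.sum_nonneg fun m' _ => hnn m')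
  refine (cbE_mono hp1 hp2 hpt).trans ?_
  rw [cbE_add, add_assoc, add_assoc]
  refine add_le_add le_rfl ?_
  have n12 : 0 ≤ ((K : ℝ) + 1) * (2 : ℝ) ^ (-c12) := by positivity
  have n1 : 0 ≤ (2 : ℝ) ^ (-c1) := by positivity
  have n2 : 0 ≤ (2 : ℝ) ^ (-c2) := by positivity
  have hterm : ∀ m1' m2', cbE (K := K) p1 p2 (fun f1 f2 =>
      (if (m1', m2') = (m1, m2) then (0 : ℝ) else 1) *
        confuse W p1 p2 s c12 c1 c2 m1 m1' m2 m2' f1 f2) ≤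
      ((K : ℝ) + 1) * (2 : ℝ) ^ (-c12) + ((if m2' = m2 then (2 : ℝ) ^ (-c1) else 0) +
        (if m1' = m1 then (2 : ℝ) ^ (-c2) else 0)) := by
    intro m1' m2'
    rw [cbE_mul_left]
    by_cases h1 : m1' = m1 <;> by_cases h2 : m2' = m2
    · subst h1 h2
      simp only [if_true, zero_mul]
      positivity
    · subst h1
      simpa [h2] using confuse_second hWpos hW1 hp1 hp2 s c12 c1 c2 m1' h2
    · subst h2
      simpa [h1] using confuse_first hWpos hW1 hp1 hp2 s c12 c1 c2 m2' h1
    · simpa [h1, h2] using confuse_both hWpos hW1 hp1 hp2 s c12 c1 c2 h1 h2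
  calc _ = ∑ m1', ∑ m2', cbE (K := K) p1 p2 (fun f1 f2 =>
      (if (m1', m2') = (m1, m2) then (0 : ℝ) else 1) *
        confuse W p1 p2 s c12 c1 c2 m1 m1' m2 m2' f1 f2) := by
        rw [cbE_sum]
        exact Finset.sum_congr rfl fun m1' _ => cbE_sum _
    _ ≤ ∑ m1' : Fin (M1 + 1), ∑ m2' : Fin (M2 + 1), (((K : ℝ) + 1) * (2 : ℝ) ^ (-c12) +
        ((if m2' = m2 then (2 : ℝ) ^ (-c1) else 0) +
        (if m1' = m1 then (2 : ℝ) ^ (-c2) else 0))) :=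
        Finset.sum_le_sum fun m1' _ => Finset.sum_le_sum fun m2' _ => hterm m1' m2'
    _ = _ := by
        simp only [Finset.sum_add_distrib, Finset.sum_const, Finset.card_univ, Fintype.card_fin,
          Finset.sum_ite_eq', Finset.mem_univ, if_true, nsmul_eq_mul, ← Finset.mul_sum]
        push_cast
        ring

end Errors

/-- **random-coding finite-blocklength bound.**  For the random code with
i.i.d. codebooks, facilitator `e(m₁,m₂) = argmax_k s(f₁(m₁,k), f₂(m₂,k))` and threshold
decoder with thresholds `c₁₂*, c₁*, c₂*`, the expected average error probability satisfies
`E[P_e] ≤ Pr(i(X̃₁,X̃₂;Ỹ) < c₁₂* or i(X̃₁;Ỹ|X̃₂) < c₁* or i(X̃₂;Ỹ|X̃₁) < c₂*)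
          + M₁M₂K·2^{−c₁₂*} + M₁·2^{−c₁*} + M₂·2^{−c₂*}`,
where `(X̃₁,X̃₂) ~ p_{X̃₁,X̃₂}` is the selected codeword pair for message `(1,1)` and `Ỹ` is
the corresponding channel output.  (Positive integers `M₁, M₂, K` are written as
`M1+1, M2+1, K+1`.) -/
theorem random_coding_finite_blocklength_bound
    (W : X1 → X2 → Y → ℝ) (p1 : X1 → ℝ) (p2 : X2 → ℝ)
    (hWpos : ∀ x1 x2 y, 0 < W x1 x2 y) (hW1 : ∀ x1 x2, ∑ y, W x1 x2 y = 1)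
    (hp1 : IsPMF p1) (hp2 : IsPMF p2)
    (M1 M2 K : ℕ) (s : X1 → X2 → ℝ) (c12 c1 c2 : ℝ) :
    (∑ f1 : Fin (M1 + 1) → Fin (K + 1) → X1, ∑ f2 : Fin (M2 + 1) → Fin (K + 1) → X2,
        cbWeight p1 p2 f1 f2 * PeCode W p1 p2 s c12 c1 c2 f1 f2) ≤
      (∑ x1, ∑ x2, ∑ y, qTilde p1 p2 s M1 M2 K x1 x2 * W x1 x2 y *
          (if ¬ goodPair W p1 p2 c12 c1 c2 x1 x2 y then (1 : ℝ) else 0)) +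
        ((M1 : ℝ) + 1) * ((M2 : ℝ) + 1) * ((K : ℝ) + 1) * (2 : ℝ) ^ (-c12) +
        ((M1 : ℝ) + 1) * (2 : ℝ) ^ (-c1) +
        ((M2 : ℝ) + 1) * (2 : ℝ) ^ (-c2) := by
  have hexp : (∑ f1 : Fin (M1 + 1) → Fin (K + 1) → X1, ∑ f2 : Fin (M2 + 1) → Fin (K + 1) → X2,
        cbWeight p1 p2 f1 f2 * PeCode W p1 p2 s c12 c1 c2 f1 f2) =
      cbE p1 p2 (fun (f1 : Fin (M1 + 1) → Fin (K + 1) → X1)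
        (f2 : Fin (M2 + 1) → Fin (K + 1) → X2) => PeCode W p1 p2 s c12 c1 c2 f1 f2) := rfl
  rw [hexp]
  unfold PeCode
  rw [cbE_mul_left, cbE_sum]
  simp only [cbE_sum (ι := Fin (M2 + 1))]
  have hsum := Finset.sum_le_sum fun m1 (_ : m1 ∈ (Finset.univ : Finset (Fin (M1 + 1)))) =>
    Finset.sum_le_sum fun m2 (_ : m2 ∈ (Finset.univ : Finset (Fin (M2 + 1)))) =>
      message_error_bound (K := K) hWpos hW1 hp1 hp2 s c12 c1 c2 m1 m2
  simp only [Finset.sum_const, Finset.card_univ, Fintype.card_fin, nsmul_eq_mul] at hsum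
  push_cast at hsum
  rw [one_div, inv_mul_le_iff₀ (by positivity), mul_assoc ((M1 : ℝ) + 1) ((M2 : ℝ) + 1)]
  exact hsum

end
end

section
/- Fix V₁>0, V₂>0, and ε∈(0,1). Then F_{S_2}^{-1}(ε) > F_{S_1}^{-1}(ε); that is, the ε-quantile of √V₂·Z₀+√V₁·max(Z₁,Z₂) is strictly larger than the ε-quantile of √V₂·Z₀+√V₁·Z₁. -/
/-!
Write `a = √V₂`, `b = √V₁`. The variable `a Z₀ + b Z₁` is Gaussian with variance `a² + b² > 0`,
whether it is realized on the two-coordinate or on the three-coordinate product space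
(`map_linComb`), so `F_{S_1}` can be compared with `F_{S_2}` on the three-coordinate space.
There `{S_2 ≤ s}` is `{a Z₀ + b Z₁ ≤ s}` with the event `{a Z₀ + b Z₂ > s}` removed, and the
removed part contains a nonempty open set, hence has positive mass: `F_{S_2}(s) < F_{S_1}(s)` for
every `s` (`FSK_two_lt_FSK_one`).

Let `q = F_{S_1}^{-1}(ε)`. Since the Gaussian law has no atoms, `F_{S_1}(q) ≤ ε`
(`cdf_csSup_le`), so `F_{S_2}(q) < ε`. Right continuity of `F_{S_2}` gives some `s > q` with
`F_{S_2}(s) < ε`, and `F_{S_2} → 1` at `+∞` makes the set defining `F_{S_2}^{-1}(ε)` bounded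
above, so `q < s ≤ F_{S_2}^{-1}(ε)`.
-/

open MeasureTheory

open ProbabilityTheory Filter Topology
open scoped NNReal

/-- The law of `n` i.i.d. standard Gaussian variables. -/
noncomputable abbrev stdGaussianPi (n : ℕ) : Measure (Fin n → ℝ) :=
  Measure.pi fun _ : Fin n => gaussianReal 0 1

/-- The variance `a² + b²` of `a X + b Y` for independent standard Gaussian `X`, `Y`. -/
noncomputable def linCombVar (a b : ℝ) : ℝ≥0 := ⟨a ^ 2 + b ^ 2, by positivity⟩

lemma map_linComb {n : ℕ} {i j : Fin n} (hij : i ≠ j) (a b : ℝ) :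
    (stdGaussianPi n).map (fun ω => a * ω i + b * ω j) = gaussianReal 0 (linCombVar a b) := by
  have hlaw : ∀ (c : ℝ) (k : Fin n), (stdGaussianPi n).map (fun ω => c * ω k)
      = gaussianReal 0 ⟨c ^ 2, sq_nonneg c⟩ := by
    intro c k
    have h1 : (stdGaussianPi n).map (fun ω => ω k) = gaussianReal 0 1 :=
      (measurePreserving_eval (fun _ : Fin n => gaussianReal 0 1) k).map_eq
    have h2 := gaussianReal_map_const_mul (μ := 0) (v := 1) c
    rw [← h1, Measure.map_map (by fun_prop) (by fun_prop), mul_zero, mul_one] at h2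
    exact h2
  have hind : IndepFun (fun ω : Fin n → ℝ => a * ω i) (fun ω => b * ω j) (stdGaussianPi n) := by
    have h := iIndepFun_pi (μ := fun _ : Fin n => gaussianReal 0 1)
      (X := fun _ x => x) (fun _ => aemeasurable_id)
    exact (h.indepFun hij).comp (φ := fun x => a * x) (ψ := fun x => b * x)
      (by fun_prop) (by fun_prop)
  have h := gaussianReal_add_gaussianReal_of_indepFun hind (hlaw a i) (hlaw b j)
  rw [add_zero] at h
  exact h

lemma FSK_one_eq_cdf (V1 V2 s : ℝ) :
    FSK V1 V2 1 s = cdf (gaussianReal 0 (linCombVar (√V2) (√V1))) s := by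
  rw [cdf_eq_real, ← map_linComb (n := 2) (i := 0) (j := 1) (by decide),
    map_measureReal_apply (by fun_prop) measurableSet_Iic]
  simp [FSK, Measure.real, Set.preimage, ciSup_unique]

lemma FSK_eq_cdf_map (V1 V2 : ℝ) (K : ℕ) (s : ℝ) :
    FSK V1 V2 K s = cdf ((stdGaussianPi (K + 1)).map
      (fun ω => √V2 * ω 0 + √V1 * ⨆ k : Fin K, ω k.succ)) s := by
  have hm : Measurable (fun ω : Fin (K + 1) → ℝ => √V2 * ω 0 + √V1 * ⨆ k : Fin K, ω k.succ) := by
    have : Measurable (fun ω : Fin (K + 1) → ℝ => ⨆ k : Fin K, ω k.succ) :=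
      Measurable.iSup (fun k => measurable_pi_apply _)
    fun_prop
  have := Measure.isProbabilityMeasure_map (μ := stdGaussianPi (K + 1)) hm.aemeasurable
  rw [cdf_eq_real, map_measureReal_apply hm measurableSet_Iic]
  rfl

lemma iSup_fin_two (f : Fin 2 → ℝ) : (⨆ k, f k) = max (f 0) (f 1) := by
  apply le_antisymm
  · exact ciSup_le (fun k => by fin_cases k <;> simp)
  · exact max_le (le_ciSup (Set.finite_range f).bddAbove 0)
      (le_ciSup (Set.finite_range f).bddAbove 1)

lemma FSK_two_lt_FSK_one {V1 : ℝ} (hV1 : 0 < V1) (V2 s : ℝ) :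
    FSK V1 V2 2 s < FSK V1 V2 1 s := by
  have hb : 0 < √V1 := Real.sqrt_pos.2 hV1
  set a := √V2 with ha
  set b := √V1 with hb'
  have h1 : FSK V1 V2 1 s = (stdGaussianPi 3).real {ω | a * ω 0 + b * ω 1 ≤ s} := by
    rw [FSK_one_eq_cdf, cdf_eq_real, ← map_linComb (n := 3) (i := 0) (j := 1) (by decide),
      map_measureReal_apply (by fun_prop) measurableSet_Iic]
    rfl
  have h2 : FSK V1 V2 2 s = (stdGaussianPi 3).real
      {ω | a * ω 0 + b * ω 1 ≤ s ∧ a * ω 0 + b * ω 2 ≤ s} := by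
    change (stdGaussianPi 3).real _ = _
    congr 1
    ext ω
    simp only [iSup_fin_two, Set.mem_ofPred_eq]
    rw [mul_max_of_nonneg _ _ hb.le, ← max_add_add_left, max_le_iff]
    rfl
  -- an open subset of `{a Z₀ + b Z₁ ≤ s}` disjoint from `{S_2 ≤ s}`
  set U : Set (Fin 3 → ℝ) := {ω | a * ω 0 + b * ω 1 < s ∧ s < a * ω 0 + b * ω 2} with hU
  have hUo : IsOpen U :=
    (isOpen_lt (f := fun ω : Fin 3 → ℝ => a * ω 0 + b * ω 1) (g := fun _ => s)
      (by fun_prop) (by fun_prop)).inter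
    (isOpen_lt (f := fun _ => s) (g := fun ω : Fin 3 → ℝ => a * ω 0 + b * ω 2)
      (by fun_prop) (by fun_prop))
  have hUne : U.Nonempty := by
    refine ⟨![0, (s - 1) / b, (s + 1) / b], ?_⟩
    simp [hU, mul_div_cancel₀ _ hb.ne']
  have : (gaussianReal 0 1).IsOpenPosMeasure :=
    (gaussianReal_absolutelyContinuous' 0 one_ne_zero).isOpenPosMeasure
  have hpos : 0 < (stdGaussianPi 3).real U :=
    ENNReal.toReal_pos (hUo.measure_pos _ hUne).ne' (measure_ne_top _ _)
  have hdisj : Disjoint {ω : Fin 3 → ℝ | a * ω 0 + b * ω 1 ≤ s ∧ a * ω 0 + b * ω 2 ≤ s} U := by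
    rw [Set.disjoint_left]
    rintro ω ⟨-, h⟩ ⟨-, h'⟩
    exact absurd h (not_le.2 h')
  have hsub : {ω : Fin 3 → ℝ | a * ω 0 + b * ω 1 ≤ s ∧ a * ω 0 + b * ω 2 ≤ s} ∪ U
      ⊆ {ω | a * ω 0 + b * ω 1 ≤ s} := by
    rintro ω (h | h)
    · exact h.1
    · exact h.1.le
  have hle := measureReal_mono (μ := stdGaussianPi 3) hsub
  rw [measureReal_union hdisj hUo.measurableSet] at hle
  rw [h1, h2]
  linarith

lemma bddAbove_cdf_le (μ : Measure ℝ) {ε : ℝ} (hε : ε < 1) : BddAbove {s | cdf μ s ≤ ε} := by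
  obtain ⟨M, hM⟩ := ((tendsto_cdf_atTop μ).eventually (lt_mem_nhds hε)).exists
  refine ⟨M, fun s hs => ?_⟩
  by_contra! h
  exact absurd (hM.trans_le (monotone_cdf μ h.le)) (not_lt.2 hs)

/-- For a law without atoms, the supremum defining the upper quantile is attained. -/
lemma cdf_csSup_le (μ : Measure ℝ) [IsProbabilityMeasure μ] (hμ : ∀ x, μ {x} = 0)
    {ε : ℝ} (hε : 0 < ε) : cdf μ (sSup {s | cdf μ s ≤ ε}) ≤ ε := by
  have hne : {s | cdf μ s ≤ ε}.Nonempty := by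
    obtain ⟨s, hs⟩ := ((tendsto_cdf_atBot μ).eventually (gt_mem_nhds hε)).exists
    exact ⟨s, hs.le⟩
  set q := sSup {s | cdf μ s ≤ ε}
  have hlim : Function.leftLim (cdf μ) q ≤ ε := by
    refine le_of_tendsto ((monotone_cdf μ).tendsto_leftLim q) ?_
    filter_upwards [self_mem_nhdsWithin] with s hs
    obtain ⟨t, ht, hst⟩ := exists_lt_of_lt_csSup hne hs
    exact (monotone_cdf μ hst.le).trans ht
  have hatom := (cdf μ).measure_singleton q
  rw [measure_cdf, hμ, eq_comm, ENNReal.ofReal_eq_zero] at hatom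
  linarith

/-- Fix `V₁ > 0`, `V₂ > 0`, and `ε ∈ (0,1)`. Then
`F_{S_2}^{-1}(ε) > F_{S_1}^{-1}(ε)`: the `ε`-quantile of `√V₂·Z₀ + √V₁·max(Z₁,Z₂)` is strictly
larger than the `ε`-quantile of `√V₂·Z₀ + √V₁·Z₁`. -/
theorem FSKinv_two_gt_one (V1 V2 : ℝ) (hV1 : 0 < V1) (hV2 : 0 < V2)
    (ε : ℝ) (hε : ε ∈ Set.Ioo (0 : ℝ) 1) :
    FSKinv V1 V2 1 ε < FSKinv V1 V2 2 ε := by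
  have hv : linCombVar (√V2) (√V1) ≠ 0 := by
    have h1 : 0 < √V1 := Real.sqrt_pos.2 hV1
    have h : 0 < √V2 ^ 2 + √V1 ^ 2 := by positivity
    exact fun h0 => h.ne' (congrArg NNReal.toReal h0)
  have hq : FSK V1 V2 1 (FSKinv V1 V2 1 ε) ≤ ε := by
    have := nullSingletonClass_gaussianReal (μ := 0) hv
    simp only [FSKinv, FSK_one_eq_cdf]
    exact cdf_csSup_le _ (fun x => measure_singleton x) hε.1
  have hlt := (FSK_two_lt_FSK_one hV1 V2 (FSKinv V1 V2 1 ε)).trans_le hq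
  set q := FSKinv V1 V2 1 ε
  simp only [FSKinv, FSK_eq_cdf_map] at hlt ⊢
  set F := cdf ((stdGaussianPi (2 + 1)).map
      (fun ω => √V2 * ω 0 + √V1 * ⨆ k : Fin 2, ω k.succ)) with hF
  have hright : ∀ᶠ s in 𝓝[>] q, F s < ε :=
    (((F.right_continuous q).mono Set.Ioi_subset_Ici_self).tendsto).eventually (gt_mem_nhds hlt)
  obtain ⟨s, hs, hqs⟩ := (hright.and self_mem_nhdsWithin).exists
  exact lt_of_lt_of_le hqs (le_csSup (bddAbove_cdf_le _ hε.2) hs.le)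
end
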